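/- (Hartogs lemma for α-subharmonic functions) Let {u_j} be a sequence of α-subharmonic functions in a domain D ⊂ ℂⁿ which is locally uniformly bounded from above, and assume limsup_{j→∞} u_j(z) ≤ g(z) for every z ∈ D, where g is continuous on D. Then for every compact set K ⋐ D and every ε > 0 there exists j₀ ∈ ℕ such that u_j(z) ≤ g(z) + ε for all z ∈ K and all j ≥ j₀. -/

import Mathlib

open MeasureTheory Filter Topology Complex Metric

noncomputable section

/-- Complex `n`-space. -/
abbrev Cn (n : ℕ) := Fin n → ℂ

/-- The Wirtinger derivative `∂f/∂z_j` of a (real-differentiable) function `f : ℂⁿ → ℂ`. -/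
noncomputable def wdz {n : ℕ} (j : Fin n) (f : Cn n → ℂ) (z : Cn n) : ℂ :=
  (fderiv ℝ f z (Pi.single j 1) - Complex.I * fderiv ℝ f z (Pi.single j Complex.I)) / 2

/-- The Wirtinger derivative `∂f/∂z̄_j` of a (real-differentiable) function `f : ℂⁿ → ℂ`. -/
noncomputable def wdzbar {n : ℕ} (j : Fin n) (f : Cn n → ℂ) (z : Cn n) : ℂ :=
  (fderiv ℝ f z (Pi.single j 1) + Complex.I * fderiv ℝ f z (Pi.single j Complex.I)) / 2

/-- The square of the Euclidean norm `|z|² = ∑ |z_i|²` on `ℂⁿ`. -/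
noncomputable def sqNorm {n : ℕ} (z : Cn n) : ℝ := ∑ i, Complex.normSq (z i)

/-- A closed, strictly positive differential form `α` of bidegree `(n-1, n-1)` with `C¹`
coefficients on `ℂⁿ`, recorded through its normalized coefficient matrix:  `coeff j k` is
the Hermitian positive-definite matrix `A_{jk}` such that
`dd^c u ∧ α = (∑_{j,k} A_{jk} ∂²u/∂z_j∂z̄_k) dV`.  In these terms closedness of `α`
reads `∑_j ∂A_{jk}/∂z_j = 0` for every `k` (the conjugate identity follows by
Hermitian symmetry). -/
structure AlphaForm (n : ℕ) where
  coeff : Fin n → Fin n → Cn n → ℂ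
  contDiff : ∀ j k, ContDiff ℝ 1 (coeff j k)
  hermitian : ∀ j k z, coeff k j z = starRingEnd ℂ (coeff j k z)
  strictlyPositive : ∀ z : Cn n, ∀ ξ : Fin n → ℂ, ξ ≠ 0 →
    0 < (∑ j, ∑ k, coeff j k z * ξ j * starRingEnd ℂ (ξ k)).re
  closed : ∀ k, ∀ z : Cn n, (∑ j, wdz j (coeff j k) z) = 0

/-- The second order operator `f ↦ ∑_{j,k} A_{jk} ∂²f/∂z_j∂z̄_k` representing the
top-degree form `dd^c f ∧ α` (with respect to Lebesgue measure). -/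
noncomputable def alphaOp {n : ℕ} (A : AlphaForm n) (f : Cn n → ℂ) (z : Cn n) : ℂ :=
  ∑ j, ∑ k, A.coeff j k z * wdzbar k (wdz j f) z

/-- The operator `alphaOp` applied to a real-valued function, returning the real part. -/
noncomputable def alphaOpR {n : ℕ} (A : AlphaForm n) (ω : Cn n → ℝ) (z : Cn n) : ℝ :=
  (alphaOp A (fun w => (ω w : ℂ)) z).re

/-- `u : ℂⁿ → EReal` is `α`-subharmonic on `D`: it is finite-or-`-∞`, strongly upper
semicontinuous on `D`, locally integrable on `D`, and the current `dd^c u ∧ α` is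
positive, i.e. `∫_D u · (α ∧ dd^c ω) ≥ 0` for every nonnegative test function `ω` on `D`. -/
def IsAlphaSubharmonicE {n : ℕ} (A : AlphaForm n) (D : Set (Cn n)) (u : Cn n → EReal) : Prop :=
  (∀ z ∈ D, u z ≠ ⊤) ∧
  UpperSemicontinuousOn u D ∧
  (∀ z₀ ∈ D, ∀ S : Set (Cn n),
      (∃ N ∈ 𝓝 z₀, volume (N \ S) = 0) → Filter.limsup u (𝓝[S] z₀) = u z₀) ∧
  LocallyIntegrableOn (fun z => (u z).toReal) D volume ∧
  ∀ ω : Cn n → ℝ, ContDiff ℝ (⊤ : ℕ∞) ω → HasCompactSupport ω → tsupport ω ⊆ D →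
    (∀ z, 0 ≤ ω z) → 0 ≤ ∫ z in D, (u z).toReal * alphaOpR A ω z

/-- A real-valued function is `α`-subharmonic on `D` if it is so as an `EReal`-valued
function. -/
def IsAlphaSubharmonic {n : ℕ} (A : AlphaForm n) (D : Set (Cn n)) (u : Cn n → ℝ) : Prop :=
  IsAlphaSubharmonicE A D (fun z => (u z : EReal))

/-- `h` is `α`-harmonic on the open set `U`: `dd^c h ∧ α = 0` there, in the sense of
currents. -/
def IsAlphaHarmonicOn {n : ℕ} (A : AlphaForm n) (U : Set (Cn n)) (h : Cn n → ℝ) : Prop :=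
  LocallyIntegrableOn h U volume ∧
  ∀ ω : Cn n → ℝ, ContDiff ℝ (⊤ : ℕ∞) ω → HasCompactSupport ω → tsupport ω ⊆ U →
    (∫ z in U, h z * alphaOpR A ω z) = 0

/-- `u` is strictly `α`-subharmonic on `G`: for every compact subdomain `G' ⋐ G` there is
`ε > 0` with `u - ε|z|²` `α`-subharmonic on `G'`. -/
def IsStrictlyAlphaSubharmonic {n : ℕ} (A : AlphaForm n) (G : Set (Cn n)) (u : Cn n → ℝ) :
    Prop :=
  ∀ G' : Set (Cn n), IsOpen G' → IsCompact (closure G') → closure G' ⊆ G →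
    ∃ ε > (0 : ℝ), IsAlphaSubharmonic A G' (fun z => u z - ε * sqNorm z)

/-- `D` is a bounded `α`-regular domain: a bounded domain carrying a negative
`α`-subharmonic exhaustion `ρ` with boundary limit `0`. -/
def IsAlphaRegularDomain {n : ℕ} (A : AlphaForm n) (D : Set (Cn n)) : Prop :=
  IsOpen D ∧ IsConnected D ∧ Bornology.IsBounded D ∧
  ∃ ρ : Cn n → ℝ, IsAlphaSubharmonic A D ρ ∧ (∀ z ∈ D, ρ z < 0) ∧
    ∀ ζ ∈ frontier D, Filter.Tendsto ρ (𝓝[D] ζ) (𝓝 0)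

/-- `D` is a strongly `α`-regular domain: `D = {ρ < 0}` for some `ρ` which is `C²` and
strictly `α`-subharmonic on a neighborhood `D⁺` of `closure D`. -/
def IsStronglyAlphaRegularDomain {n : ℕ} (A : AlphaForm n) (D : Set (Cn n)) : Prop :=
  IsOpen D ∧ IsConnected D ∧ Bornology.IsBounded D ∧
  ∃ Dp : Set (Cn n), IsOpen Dp ∧ closure D ⊆ Dp ∧
    ∃ ρ : Cn n → ℝ, ContDiffOn ℝ 2 ρ Dp ∧ IsStrictlyAlphaSubharmonic A Dp ρ ∧
      D = {z ∈ Dp | ρ z < 0}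

/-- The class `U(E, D, ψ)` of `α`-subharmonic functions `u` on `D` with `u ≤ ψ` on `E`
and `u < 0` on `D`. -/
def Uclass {n : ℕ} (A : AlphaForm n) (E D : Set (Cn n)) (ψ : Cn n → ℝ) :
    Set (Cn n → ℝ) :=
  {u | IsAlphaSubharmonic A D u ∧ (∀ z ∈ E, u z ≤ ψ z) ∧ ∀ z ∈ D, u z < 0}

/-- The weighted extremal function `ω_α(z, E, D, ψ)`. -/
noncomputable def omegaW {n : ℕ} (A : AlphaForm n) (E D : Set (Cn n)) (ψ : Cn n → ℝ)
    (z : Cn n) : ℝ :=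
  sSup ((fun u : Cn n → ℝ => u z) '' Uclass A E D ψ)

/-- The weighted `α`-subharmonic measure `ω*_α(z, E, D, ψ)`: the upper semicontinuous
regularization of `ω_α(·, E, D, ψ)`. -/
noncomputable def omegaWStar {n : ℕ} (A : AlphaForm n) (E D : Set (Cn n)) (ψ : Cn n → ℝ)
    (z : Cn n) : ℝ :=
  Filter.limsup (omegaW A E D ψ) (𝓝 z)

/-- The (unweighted) extremal function `ω_α(z, E, D)`. -/
noncomputable def omega0 {n : ℕ} (A : AlphaForm n) (E D : Set (Cn n)) : Cn n → ℝ :=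
  omegaW A E D (fun _ => (-1 : ℝ))

/-- The (unweighted) `α`-subharmonic measure `ω*_α(z, E, D)`. -/
noncomputable def omega0Star {n : ℕ} (A : AlphaForm n) (E D : Set (Cn n)) : Cn n → ℝ :=
  omegaWStar A E D (fun _ => (-1 : ℝ))

/-- `S` is `α`-polar in `D`: there is an `α`-subharmonic `ρ` on `D`, not identically
`-∞`, with `ρ = -∞` on `S`. -/
def IsAlphaPolar {n : ℕ} (A : AlphaForm n) (D S : Set (Cn n)) : Prop :=
  ∃ ρ : Cn n → EReal, IsAlphaSubharmonicE A D ρ ∧ (∃ z ∈ D, ρ z ≠ ⊥) ∧ ∀ z ∈ S, ρ z = ⊥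

/-- `u` is plurisubharmonic on `D`: upper semicontinuous, locally integrable, and with
positive semidefinite complex Hessian in the sense of distributions. -/
def IsPlurisubharmonic {n : ℕ} (D : Set (Cn n)) (u : Cn n → ℝ) : Prop :=
  UpperSemicontinuousOn u D ∧ LocallyIntegrableOn u D volume ∧
  ∀ ξ : Fin n → ℂ, ∀ ω : Cn n → ℝ, ContDiff ℝ (⊤ : ℕ∞) ω → HasCompactSupport ω →
    tsupport ω ⊆ D → (∀ z, 0 ≤ ω z) →
    0 ≤ ∫ z in D, u z *
      (∑ j, ∑ k, ξ j * starRingEnd ℂ (ξ k) * wdzbar k (wdz j (fun w => (ω w : ℂ))) z).re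

/-- The class `U(E,D)` for the plurisubharmonic measure. -/
def UclassPsh {n : ℕ} (E D : Set (Cn n)) : Set (Cn n → ℝ) :=
  {u | IsPlurisubharmonic D u ∧ (∀ z ∈ E, u z ≤ -1) ∧ ∀ z ∈ D, u z < 0}

/-- The plurisubharmonic extremal function `ω(z, E, D)`. -/
noncomputable def omegaPsh {n : ℕ} (E D : Set (Cn n)) (z : Cn n) : ℝ :=
  sSup ((fun u : Cn n → ℝ => u z) '' UclassPsh E D)

/-- The plurisubharmonic measure `ω*(z, E, D)`. -/
noncomputable def omegaPshStar {n : ℕ} (E D : Set (Cn n)) (z : Cn n) : ℝ :=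
  Filter.limsup (omegaPsh E D) (𝓝 z)

end


lemma wirt_aux {n : ℕ} {f : Cn n → ℂ} {z : Cn n} {L : Cn n →L[ℝ] ℂ} (hf : HasFDerivAt f L z)
    (a b : Fin n → ℂ)
    (hL : ∀ v, L v = (∑ i, a i * v i) + ∑ i, b i * (starRingEnd ℂ) (v i)) (j : Fin n) :
    wdz j f z = a j ∧ wdzbar j f z = b j := by
  have h1 : L (Pi.single j 1) = a j + b j := by
    rw [hL]; congr 1
    · rw [Finset.sum_eq_single j] <;> simp +contextual
    · rw [Finset.sum_eq_single j] <;> simp +contextual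
  have h2 : L (Pi.single j I) = a j * I - b j * I := by
    rw [hL, sub_eq_add_neg]; congr 1
    · rw [Finset.sum_eq_single j] <;> simp +contextual
    · rw [Finset.sum_eq_single j] <;> simp +contextual
  unfold wdz wdzbar
  rw [hf.fderiv, h1, h2]
  constructor
  · linear_combination (-(a j - b j) / 2) * I_mul_I
  · linear_combination ((a j - b j) / 2) * I_mul_I

/-- The conjugate-linear coefficient `∂q/∂z_j` of the Hermitian form with matrix `B`. -/
noncomputable def hQ {n : ℕ} (B : Fin n → Fin n → ℂ) (j : Fin n) (x : Cn n) : ℂ :=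
  ∑ k, B j k * (starRingEnd ℂ) (x k)

/-- The Hermitian form with matrix `B`. -/
noncomputable def hq {n : ℕ} (B : Fin n → Fin n → ℂ) (x : Cn n) : ℝ :=
  (∑ j, x j * hQ B j x).re

lemma conj_hQ {n : ℕ} {B : Fin n → Fin n → ℂ} (hB : ∀ j k, B k j = (starRingEnd ℂ) (B j k))
    (j : Fin n) (x : Cn n) : (starRingEnd ℂ) (hQ B j x) = ∑ k, B k j * x k := by
  simp [hQ, hB j]

lemma hq_coe {n : ℕ} {B : Fin n → Fin n → ℂ} (hB : ∀ j k, B k j = (starRingEnd ℂ) (B j k))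
    (x : Cn n) : (hq B x : ℂ) = ∑ j, x j * hQ B j x := by
  unfold hq
  rw [← Complex.conj_eq_iff_re, map_sum]
  simp only [map_mul, conj_hQ hB]
  simp only [hQ, Finset.mul_sum]
  rw [Finset.sum_comm]
  exact Finset.sum_congr rfl fun i _ => Finset.sum_congr rfl fun j _ => by ring

/-- Conjugate coordinate as a real-linear map. -/
noncomputable def cjL {n : ℕ} (k : Fin n) : Cn n →L[ℝ] ℂ :=
  (Complex.conjCLE : ℂ →L[ℝ] ℂ).comp (ContinuousLinearMap.proj (R := ℝ) k)

lemma cjL_apply {n : ℕ} (k : Fin n) (x : Cn n) : cjL k x = (starRingEnd ℂ) (x k) := by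
  simp [cjL]

lemma hQ_hasFDerivAt {n : ℕ} (B : Fin n → Fin n → ℂ) (j : Fin n) (x : Cn n) :
    HasFDerivAt (hQ B j) (∑ k, B j k • cjL k) x := by
  have : hQ B j = fun x => (∑ k, B j k • cjL k : Cn n →L[ℝ] ℂ) x := by
    funext x
    simp [hQ, cjL_apply]
  rw [this]
  exact ContinuousLinearMap.hasFDerivAt _

lemma hqc_hasFDerivAt {n : ℕ} {B : Fin n → Fin n → ℂ}
    (hB : ∀ j k, B k j = (starRingEnd ℂ) (B j k)) (x : Cn n) :
    ∃ L : Cn n →L[ℝ] ℂ, HasFDerivAt (fun y => (hq B y : ℂ)) L x ∧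
      ∀ v, L v = (∑ i, hQ B i x * v i) + ∑ i, (starRingEnd ℂ) (hQ B i x) * (starRingEnd ℂ) (v i) := by
  have h0 : HasFDerivAt (fun y : Cn n => ∑ j, y j * hQ B j y) _ x :=
    HasFDerivAt.fun_sum fun j _ => (ContinuousLinearMap.hasFDerivAt (x := x)
      (ContinuousLinearMap.proj (R := ℝ) (φ := fun _ : Fin n => ℂ) j)).mul (hQ_hasFDerivAt B j x)
  have e : (fun y => (hq B y : ℂ)) = fun y => ∑ j, y j * hQ B j y := funext fun y => hq_coe hB y
  refine ⟨_, e ▸ h0, ?_⟩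
  · intro v
    simp only [_root_.sum_apply, _root_.add_apply, _root_.smul_apply, cjL_apply, ContinuousLinearMap.proj_apply, smul_eq_mul, conj_hQ hB]
    rw [Finset.sum_add_distrib, add_comm]
    congr 1
    simp only [Finset.mul_sum, Finset.sum_mul]
    rw [Finset.sum_comm]
    exact Finset.sum_congr rfl fun i _ => Finset.sum_congr rfl fun j _ => by ring

lemma hq_hasFDerivAt {n : ℕ} {B : Fin n → Fin n → ℂ}
    (hB : ∀ j k, B k j = (starRingEnd ℂ) (B j k)) (x : Cn n) :
    ∃ L : Cn n →L[ℝ] ℝ, HasFDerivAt (hq B) L x ∧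
      ∀ v, (L v : ℂ) = (∑ i, hQ B i x * v i) + ∑ i, (starRingEnd ℂ) (hQ B i x) * (starRingEnd ℂ) (v i) := by
  obtain ⟨L, hL, hv⟩ := hqc_hasFDerivAt hB x
  have h2 : HasFDerivAt (hq B) (reCLM.comp L) x := by
    have := reCLM.hasFDerivAt.comp x hL
    simpa [Function.comp_def] using this
  refine ⟨_, h2, fun v => ?_⟩
  have h3 := ofRealCLM.hasFDerivAt.comp x h2
  have := h3.unique hL
  rw [← hv, ← this]; simp

lemma wdz_radial {n : ℕ} {B : Fin n → Fin n → ℂ}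
    (hB : ∀ j k, B k j = (starRingEnd ℂ) (B j k)) (z' : Cn n) {F F' : ℝ → ℝ}
    (hF : ∀ t, HasDerivAt F (F' t) t) (j : Fin n) (z : Cn n) :
    wdz j (fun w => ((F (hq B (w - z')) : ℝ) : ℂ)) z = (F' (hq B (z - z')) : ℂ) * hQ B j (z - z') := by
  obtain ⟨L, hL, hv⟩ := hq_hasFDerivAt hB (z - z')
  have h1 : HasFDerivAt (fun w => hq B (w - z')) L z := by
    simpa [Function.comp_def] using hL.comp z ((hasFDerivAt_id z).sub_const z')
  have h2 := ofRealCLM.hasFDerivAt.comp z ((hF (hq B (z - z'))).comp_hasFDerivAt z h1)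
  refine (wirt_aux h2 (fun i => (F' (hq B (z - z')) : ℂ) * hQ B i (z - z'))
    (fun i => (F' (hq B (z - z')) : ℂ) * (starRingEnd ℂ) (hQ B i (z - z'))) (fun v => ?_) j).1
  simp [hv, mul_add, Finset.mul_sum, mul_assoc]

lemma alphaOp_radial {n : ℕ} (A : AlphaForm n) {B : Fin n → Fin n → ℂ}
    (hB : ∀ j k, B k j = (starRingEnd ℂ) (B j k)) (z' : Cn n) {F F' F'' : ℝ → ℝ}
    (hF : ∀ t, HasDerivAt F (F' t) t) (hF' : ∀ t, HasDerivAt F' (F'' t) t) (z : Cn n) :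
    alphaOp A (fun w => ((F (hq B (w - z')) : ℝ) : ℂ)) z =
      (F'' (hq B (z - z')) : ℂ) * (∑ j, ∑ k, A.coeff j k z * hQ B j (z - z') *
        (starRingEnd ℂ) (hQ B k (z - z'))) +
      (F' (hq B (z - z')) : ℂ) * ∑ j, ∑ k, A.coeff j k z * B j k := by
  unfold alphaOp
  simp only [Finset.mul_sum, ← Finset.sum_add_distrib]
  refine Finset.sum_congr rfl fun j _ => Finset.sum_congr rfl fun k _ => ?_
  have : wdz j (fun w => ((F (hq B (w - z')) : ℝ) : ℂ)) =
    fun z => (F' (hq B (z - z')) : ℂ) * hQ B j (z - z') := funext fun z => wdz_radial hB z' hF j z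
  rw [this]
  obtain ⟨L, hL, hv⟩ := hq_hasFDerivAt hB (z - z')
  have h1 : HasFDerivAt (fun w => hq B (w - z')) L z := by
    simpa [Function.comp_def] using hL.comp z ((hasFDerivAt_id z).sub_const z')
  have h2 := ofRealCLM.hasFDerivAt.comp z ((hF' (hq B (z - z'))).comp_hasFDerivAt z h1)
  have h3 : HasFDerivAt (fun w => hQ B j (w - z')) (∑ k, B j k • cjL k) z := by
    simpa [Function.comp_def] using (hQ_hasFDerivAt B j (z - z')).comp z ((hasFDerivAt_id z).sub_const z')
  have h4 := h2.mul h3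
  have := (wirt_aux h4 (fun i => (F'' (hq B (z - z')) : ℂ) * hQ B i (z - z') * hQ B j (z - z'))
    (fun i => (F'' (hq B (z - z')) : ℂ) * (starRingEnd ℂ) (hQ B i (z - z')) * hQ B j (z - z')
      + (F' (hq B (z - z')) : ℂ) * B j i) (fun v => ?_) k).2
  · have e : (fun z => (F' (hq B (z - z')) : ℂ) * hQ B j (z - z')) = ((⇑ofRealCLM ∘ (F' ∘ fun w => hq B (w - z'))) * fun w => hQ B j (w - z')) := by
      funext z; simp
    rw [e, this]; ring
  · simp only [_root_.sum_apply, _root_.add_apply, _root_.smul_apply, cjL_apply, smul_eq_mul, ContinuousLinearMap.comp_apply, ofRealCLM_apply, Function.comp, ofReal_mul, hv]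
    simp only [add_mul, mul_add, Finset.mul_sum, Finset.sum_add_distrib]
    rw [add_comm, add_assoc]
    congr 1
    · exact Finset.sum_congr rfl fun i _ => by ring
    · congr 1
      · exact Finset.sum_congr rfl fun i _ => by ring
      · exact Finset.sum_congr rfl fun i _ => by ring


lemma wdz_contDiff {n : ℕ} {f : Cn n → ℂ} (hf : ContDiff ℝ (⊤ : ℕ∞) f) (j : Fin n) :
    ContDiff ℝ (⊤ : ℕ∞) (wdz j f) := by
  have h : ContDiff ℝ (⊤ : ℕ∞) (fderiv ℝ f) := hf.fderiv_right (m := (⊤ : ℕ∞)) (by simp)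
  unfold wdz
  exact ((h.clm_apply contDiff_const).sub (contDiff_const.mul (h.clm_apply contDiff_const))).div_const _

lemma wdzbar_continuous {n : ℕ} {f : Cn n → ℂ} (hf : ContDiff ℝ 1 f) (j : Fin n) :
    Continuous (wdzbar j f) := by
  have h : Continuous (fderiv ℝ f) := hf.continuous_fderiv one_ne_zero
  unfold wdzbar
  fun_prop

lemma wdz_tsupport {n : ℕ} (f : Cn n → ℂ) (j : Fin n) :
    tsupport (wdz j f) ⊆ tsupport f := by
  refine closure_minimal (fun z hz => ?_) (isClosed_tsupport f)
  by_contra h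
  have : fderiv ℝ f z = 0 := by
    by_contra h'
    exact h (support_fderiv_subset ℝ h')
  exact hz (by simp [wdz, this])

lemma wdzbar_support {n : ℕ} (f : Cn n → ℂ) (j : Fin n) :
    Function.support (wdzbar j f) ⊆ tsupport f := by
  intro z hz
  by_contra h
  have : fderiv ℝ f z = 0 := by
    by_contra h'
    exact h (support_fderiv_subset ℝ h')
  exact hz (by simp [wdzbar, this])

lemma tsupport_ofReal {n : ℕ} (ω : Cn n → ℝ) : tsupport (fun w => (ω w : ℂ)) = tsupport ω := by
  unfold tsupport; congr 1; ext x; simp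

lemma alphaOp_continuous {n : ℕ} (A : AlphaForm n) {f : Cn n → ℂ} (hf : ContDiff ℝ (⊤ : ℕ∞) f) :
    Continuous (alphaOp A f) := by
  unfold alphaOp
  refine continuous_finsetSum _ fun j _ => continuous_finsetSum _ fun k _ => ?_
  exact (A.contDiff j k).continuous.mul (wdzbar_continuous ((wdz_contDiff hf j).of_le (by simp)) k)

lemma alphaOp_support {n : ℕ} (A : AlphaForm n) (f : Cn n → ℂ) (z : Cn n) (hz : z ∉ tsupport f) :
    alphaOp A f z = 0 := by
  unfold alphaOp
  refine Finset.sum_eq_zero fun j _ => Finset.sum_eq_zero fun k _ => ?_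
  have : wdzbar k (wdz j f) z = 0 := by
    by_contra h
    exact hz (wdz_tsupport f j (wdzbar_support _ k h))
  simp [this]

lemma coeff_closed' {n : ℕ} (A : AlphaForm n) (j : Fin n) (z : Cn n) :
    ∑ k, wdzbar k (A.coeff j k) z = 0 := by
  have h := congrArg (starRingEnd ℂ) (A.closed j z)
  rw [map_sum, map_zero] at h
  rw [← h]
  refine Finset.sum_congr rfl fun k _ => ?_
  have e : A.coeff j k = fun z => (starRingEnd ℂ) (A.coeff k j z) := funext fun z => A.hermitian k j z
  have hd : DifferentiableAt ℝ (A.coeff k j) z := (A.contDiff k j).differentiable one_ne_zero z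
  have h1 : HasFDerivAt (A.coeff j k) ((conjCLE : ℂ →L[ℝ] ℂ).comp (fderiv ℝ (A.coeff k j) z)) z := by
    rw [e]
    exact (conjCLE : ℂ →L[ℝ] ℂ).hasFDerivAt.comp z hd.hasFDerivAt
  unfold wdz wdzbar
  rw [h1.fderiv]
  simp [map_ofNat (starRingEnd ℂ) 2]

lemma integral_wdzbar {n : ℕ} {a f : Cn n → ℂ} (ha : ContDiff ℝ 1 a) (hf : ContDiff ℝ 1 f)
    (hc : HasCompactSupport f) (k : Fin n) :
    Integrable (fun z => a z * wdzbar k f z) ∧ Integrable (fun z => wdzbar k a z * f z) ∧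
    ∫ z, a z * wdzbar k f z = - ∫ z, wdzbar k a z * f z := by
  have ca := ha.continuous
  have cf := hf.continuous
  have cda : Continuous (fderiv ℝ a) := ha.continuous_fderiv one_ne_zero
  have cdf : Continuous (fderiv ℝ f) := hf.continuous_fderiv one_ne_zero
  have hcd : HasCompactSupport (fderiv ℝ f) := hc.fderiv (𝕜 := ℝ)
  have i1 : ∀ v, Integrable (fun z => fderiv ℝ a z v * f z) := fun v =>
    Continuous.integrable_of_hasCompactSupport (by fun_prop) hc.mul_left
  have i2 : ∀ v, Integrable (fun z => a z * fderiv ℝ f z v) := fun v =>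
    Continuous.integrable_of_hasCompactSupport (by fun_prop) (HasCompactSupport.mul_left (hc.fderiv_apply (𝕜 := ℝ) v))
  have i3 : Integrable (fun z => a z * f z) :=
    Continuous.integrable_of_hasCompactSupport (by fun_prop) hc.mul_left
  have key : ∀ v, ∫ z, a z * fderiv ℝ f z v = - ∫ z, fderiv ℝ a z v * f z := fun v =>
    integral_mul_fderiv_eq_neg_fderiv_mul_of_integrable (i1 v) (i2 v) i3
      (fun x _ => ha.differentiable one_ne_zero x) (fun x _ => hf.differentiable one_ne_zero x)
  have e1 : (fun z => a z * wdzbar k f z) = fun z => (1/2 : ℂ) * (a z * fderiv ℝ f z (Pi.single k 1)) + (I/2) * (a z * fderiv ℝ f z (Pi.single k I)) := by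
    funext z; unfold wdzbar; ring
  have e2 : (fun z => wdzbar k a z * f z) = fun z => (1/2 : ℂ) * (fderiv ℝ a z (Pi.single k 1) * f z) + (I/2) * (fderiv ℝ a z (Pi.single k I) * f z) := by
    funext z; unfold wdzbar; ring
  rw [e1, e2]
  refine ⟨((i2 _).const_mul _).add ((i2 _).const_mul _), ((i1 _).const_mul _).add ((i1 _).const_mul _), ?_⟩
  rw [integral_add ((i2 _).const_mul _) ((i2 _).const_mul _), integral_add ((i1 _).const_mul _) ((i1 _).const_mul _)]
  simp only [integral_const_mul, key]
  ring

lemma integral_alphaOp {n : ℕ} (A : AlphaForm n) {f : Cn n → ℂ} (hf : ContDiff ℝ (⊤ : ℕ∞) f)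
    (hc : HasCompactSupport f) : ∫ z, alphaOp A f z = 0 := by
  unfold alphaOp
  have h := fun j k => integral_wdzbar (A.contDiff j k) ((wdz_contDiff hf j).of_le (by simp))
    (hc.of_isClosed_subset (isClosed_tsupport _) (wdz_tsupport f j)) k
  rw [integral_finsetSum _ fun j _ => integrable_finsetSum _ fun k _ => (h j k).1]
  refine Finset.sum_eq_zero fun j _ => ?_
  rw [integral_finsetSum _ fun k _ => (h j k).1]
  simp only [fun k => (h j k).2.2, Finset.sum_neg_distrib]
  rw [← integral_finsetSum _ fun k _ => (h j k).2.1]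
  simp [← Finset.sum_mul, coeff_closed']

lemma alphaOpR_facts {n : ℕ} (A : AlphaForm n) {ω : Cn n → ℝ} (hf : ContDiff ℝ (⊤ : ℕ∞) ω)
    (hc : HasCompactSupport ω) : Continuous (alphaOpR A ω) ∧
      (∀ z, z ∉ tsupport ω → alphaOpR A ω z = 0) ∧ HasCompactSupport (alphaOpR A ω) ∧
      ∫ z, alphaOpR A ω z = 0 := by
  have h1 : ContDiff ℝ (⊤ : ℕ∞) (fun w => (ω w : ℂ)) := ofRealCLM.contDiff.comp hf
  have h2 : HasCompactSupport (fun w => (ω w : ℂ)) := by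
    unfold HasCompactSupport; rw [tsupport_ofReal]; exact hc
  have hcont := alphaOp_continuous A h1
  have h3 : ∀ z, z ∉ tsupport ω → alphaOp A (fun w => (ω w : ℂ)) z = 0 := fun z hz =>
      alphaOp_support A _ z (by rwa [tsupport_ofReal])
  refine ⟨continuous_re.comp hcont, fun z hz => by simp [alphaOpR, h3 z hz],
    HasCompactSupport.intro hc fun z hz => by simp [alphaOpR, h3 z hz], ?_⟩
  have h4 : Integrable (alphaOp A (fun w => (ω w : ℂ))) :=
    hcont.integrable_of_hasCompactSupport (HasCompactSupport.intro hc h3)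
  have := integral_alphaOp A h1 h2
  unfold alphaOpR
  have h5 := integral_re h4
  simp only [RCLike.re_eq_complex_re] at h5
  rw [h5, this]; simp


/-- The radial profile. -/
noncomputable def prof (n : ℕ) (R s t : ℝ) : ℝ :=
  expNegInvGlue (R - √t) * Real.smoothTransition (2 * t / s ^ 2 - 1) * (t ^ n)⁻¹

lemma prof_zero_left {n : ℕ} {R s t : ℝ} (hs : 0 < s) (ht : t ≤ s ^ 2 / 2) : prof n R s t = 0 := by
  have : Real.smoothTransition (2 * t / s ^ 2 - 1) = 0 := by
    apply Real.smoothTransition.zero_of_nonpos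
    rw [sub_nonpos, div_le_one (by positivity)]; linarith
  simp [prof, this]

lemma prof_zero_right {n : ℕ} {R s t : ℝ} (ht : R ^ 2 ≤ t) : prof n R s t = 0 := by
  have : expNegInvGlue (R - √t) = 0 := by
    apply expNegInvGlue.zero_of_nonpos
    rw [sub_nonpos]; exact Real.le_sqrt_of_sq_le ht
  simp [prof, this]

lemma prof_nonneg {n : ℕ} {R s : ℝ} (hs : 0 < s) (t : ℝ) : 0 ≤ prof n R s t := by
  rcases le_total t (s ^ 2 / 2) with h | h
  · rw [prof_zero_left hs h]
  · have : 0 < t := lt_of_lt_of_le (by positivity) h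
    have := expNegInvGlue.nonneg (R - √t)
    have := Real.smoothTransition.nonneg (2 * t / s ^ 2 - 1)
    unfold prof; positivity

lemma prof_contDiff {n : ℕ} {R s : ℝ} (hs : 0 < s) : ContDiff ℝ (⊤ : ℕ∞) (prof n R s) := by
  rw [contDiff_iff_contDiffAt]
  intro t
  rcases lt_or_ge t (s ^ 2 / 2) with h | h
  · have : prof n R s =ᶠ[𝓝 t] fun _ => 0 := by
      filter_upwards [Iio_mem_nhds h] with x hx
      exact prof_zero_left hs hx.le
    exact contDiffAt_const.congr_of_eventuallyEq this
  · have h0 : 0 < t := lt_of_lt_of_le (by positivity) h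
    unfold prof
    refine ContDiffAt.mul (ContDiffAt.mul ?_ ?_) ?_
    · exact (expNegInvGlue.contDiff (n := ⊤)).contDiffAt.comp t (contDiffAt_const.sub (Real.contDiffAt_sqrt h0.ne'))
    · refine (Real.smoothTransition.contDiff (n := ⊤)).contDiffAt.comp t ?_
      fun_prop
    · exact ContDiffAt.inv (by fun_prop) (by positivity)

lemma prof_deriv_zero {n : ℕ} {R s t : ℝ} (hs : 0 < s) (h : prof n R s t = 0) :
    deriv (prof n R s) t = 0 :=
  IsLocalMin.deriv_eq_zero (Filter.Eventually.of_forall fun x => by rw [h]; exact prof_nonneg hs x)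

lemma glue_hasDerivAt {y : ℝ} (hy : 0 < y) :
    HasDerivAt expNegInvGlue (expNegInvGlue y * (y⁻¹) ^ 2) y := by
  have h1 : HasDerivAt (fun x : ℝ => Real.exp (-x⁻¹)) (Real.exp (-y⁻¹) * (y⁻¹) ^ 2) y := by
    have := ((hasDerivAt_inv hy.ne').neg).exp
    exact this.congr_deriv (by simp)
  have e : ∀ x : ℝ, 0 < x → expNegInvGlue x = Real.exp (-x⁻¹) := fun x hx => by
    simp [expNegInvGlue, hx.not_ge]
  rw [e y hy]
  refine h1.congr_of_eventuallyEq ?_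
  filter_upwards [Ioi_mem_nhds hy] with x hx using e x hx

lemma glue_bound {y : ℝ} (hy : 0 < y) : expNegInvGlue y * (y⁻¹) ^ 2 ≤ 2 := by
  have e : expNegInvGlue y = Real.exp (-y⁻¹) := by simp [expNegInvGlue, hy.not_ge]
  rw [e, Real.exp_neg]
  have hp : 0 < y⁻¹ := by positivity
  have := Real.quadratic_le_exp_of_nonneg hp.le
  rw [inv_mul_le_iff₀ (Real.exp_pos _)]
  nlinarith

lemma glue_le_one (y : ℝ) : expNegInvGlue y ≤ 1 := by
  unfold expNegInvGlue
  split_ifs with h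
  · exact zero_le_one
  · have : 0 < y⁻¹ := by push Not at h; positivity
    exact Real.exp_le_one_iff.2 (by linarith)

lemma smoothTransition_deriv_bound : ∃ C : ℝ, 0 < C ∧ ∀ x, 0 ≤ deriv Real.smoothTransition x ∧
    deriv Real.smoothTransition x ≤ C := by
  have hc : Continuous (deriv Real.smoothTransition) :=
    (Real.smoothTransition.contDiff (n := 1)).continuous_deriv_one
  obtain ⟨C, hC⟩ := (isCompact_Icc (a := (-1:ℝ)) (b := 2)).exists_bound_of_continuousOn hc.continuousOn
  refine ⟨max C 1, by positivity, fun x => ⟨Real.smoothTransition.monotone.deriv_nonneg, ?_⟩⟩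
  by_cases hx : x ∈ Set.Icc (-1:ℝ) 2
  · exact (le_abs_self _).trans ((hC x hx).trans (le_max_left _ _))
  · have : deriv Real.smoothTransition x = 0 := by
      simp only [Set.mem_Icc, not_and_or, not_le] at hx
      rcases hx with hx | hx
      · have : Real.smoothTransition =ᶠ[𝓝 x] fun _ => 0 := by
          filter_upwards [Iio_mem_nhds hx] with y hy
          exact Real.smoothTransition.zero_of_nonpos (by linarith [Set.mem_Iio.1 hy])
        rw [this.deriv_eq]; simp
      · have : Real.smoothTransition =ᶠ[𝓝 x] fun _ => 1 := by
          filter_upwards [Ioi_mem_nhds hx] with y hy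
          exact Real.smoothTransition.one_of_one_le (by linarith [Set.mem_Ioi.1 hy])
        rw [this.deriv_eq]; simp
    rw [this]; positivity

lemma prof_hasDerivAt {n : ℕ} {R s t : ℝ} (ht : 0 < t) (htR : √t < R) :
    HasDerivAt (prof n R s)
      ((-(expNegInvGlue (R - √t) * ((R - √t)⁻¹) ^ 2 / (2 * √t)) * Real.smoothTransition (2 * t / s ^ 2 - 1)
        + expNegInvGlue (R - √t) * (deriv Real.smoothTransition (2 * t / s ^ 2 - 1) * (2 / s ^ 2))) * (t ^ n)⁻¹
        - n * (expNegInvGlue (R - √t) * Real.smoothTransition (2 * t / s ^ 2 - 1)) * (t ^ n)⁻¹ / t) t := by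
  have h1 : HasDerivAt (fun t => expNegInvGlue (R - √t)) (-(expNegInvGlue (R - √t) * ((R - √t)⁻¹) ^ 2 / (2 * √t))) t := by
    have := (glue_hasDerivAt (sub_pos.2 htR)).comp t ((Real.hasDerivAt_sqrt ht.ne').const_sub R)
    exact this.congr_deriv (by field_simp)
  have h2 : HasDerivAt (fun t => Real.smoothTransition (2 * t / s ^ 2 - 1)) (deriv Real.smoothTransition (2 * t / s ^ 2 - 1) * (2 / s ^ 2)) t := by
    have h3 : HasDerivAt Real.smoothTransition (deriv Real.smoothTransition (2 * t / s ^ 2 - 1)) (2 * t / s ^ 2 - 1) :=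
      ((Real.smoothTransition.contDiff (n := 1)).differentiable one_ne_zero _).hasDerivAt
    have h4 : HasDerivAt (fun t : ℝ => 2 * t / s ^ 2 - 1) (2 / s ^ 2) t := by
      have := (((hasDerivAt_id t).const_mul 2).div_const (s ^ 2)).sub_const 1
      simpa using this
    exact h3.comp t h4
  have h5 : HasDerivAt (fun t : ℝ => (t ^ n)⁻¹) (- (n * (t ^ n)⁻¹ / t)) t := by
    have := (hasDerivAt_pow n t).inv (by positivity)
    refine this.congr_deriv ?_
    rcases n with _ | n
    · simp
    · simp; field_simp; ring
  have := (h1.mul h2).mul h5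
  refine this.congr_deriv ?_
  simp; ring


/-- Primitive of the profile. -/
noncomputable def primF (n : ℕ) (R s t : ℝ) : ℝ := ∫ x in t..(R ^ 2), prof n R s x

lemma primF_hasDerivAt {n : ℕ} {R s : ℝ} (hs : 0 < s) (t : ℝ) :
    HasDerivAt (primF n R s) (-prof n R s t) t := by
  have hc := (prof_contDiff (n := n) (R := R) hs).continuous
  exact intervalIntegral.integral_hasDerivAt_left (hc.intervalIntegrable _ _)
    (hc.stronglyMeasurableAtFilter _ _) hc.continuousAt

lemma primF_contDiff {n : ℕ} {R s : ℝ} (hs : 0 < s) : ContDiff ℝ (⊤ : ℕ∞) (primF n R s) := by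
  rw [contDiff_infty_iff_deriv]
  refine ⟨fun t => (primF_hasDerivAt hs t).differentiableAt, ?_⟩
  have : deriv (primF n R s) = fun t => -prof n R s t := funext fun t => (primF_hasDerivAt hs t).deriv
  rw [this]
  exact (prof_contDiff hs).neg

lemma primF_zero {n : ℕ} {R s t : ℝ} (ht : R ^ 2 ≤ t) : primF n R s t = 0 := by
  unfold primF
  rw [intervalIntegral.integral_symm]
  have : ∫ x in (R ^ 2)..t, prof n R s x = ∫ x in (R ^ 2)..t, (0 : ℝ) := by
    apply intervalIntegral.integral_congr
    intro x hx
    rw [Set.uIcc_of_le ht] at hx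
    exact prof_zero_right hx.1
  rw [this]; simp

lemma primF_nonneg {n : ℕ} {R s : ℝ} (hs : 0 < s) (t : ℝ) : 0 ≤ primF n R s t := by
  rcases le_total t (R ^ 2) with h | h
  · exact intervalIntegral.integral_nonneg h fun x _ => prof_nonneg hs x
  · rw [primF_zero h]

lemma prof_deriv_hasDerivAt {n : ℕ} {R s : ℝ} (hs : 0 < s) (t : ℝ) :
    HasDerivAt (fun t => -prof n R s t) (-deriv (prof n R s) t) t :=
  (((prof_contDiff hs).differentiable (by simp)) t).hasDerivAt.neg

set_option maxHeartbeats 1000000 in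
/-- Bounds for the operator applied to the profile. -/
lemma prof_bounds {n : ℕ} (hn : 1 ≤ n) {c R : ℝ} (hc : 0 ≤ c) (hR : 0 < R) (hR1 : R ≤ 1)
    (hcR : c * R ≤ 1 / 2) (hcR2 : 8 * (n + 1) * c * R ^ 2 ≤ 1) :
    ∃ C K m : ℝ, 0 ≤ C ∧ 0 ≤ K ∧ 0 < m ∧ ∀ s t S T : ℝ, 0 < s → 0 ≤ t →
      (t < R ^ 2 → |S - t| ≤ c * t * √t ∧ |T - n| ≤ c * √t) →
      (-deriv (prof n R s) t * S + (-prof n R s t) * T ≤ C * (√t * (t ^ n)⁻¹)) ∧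
      (-(K / s ^ (2 * n)) ≤ -deriv (prof n R s) t * S + (-prof n R s t) * T) ∧
      (s ^ 2 ≤ t → 0 ≤ -deriv (prof n R s) t * S + (-prof n R s t) * T) ∧
      (s ^ 2 ≤ t → t ≤ R ^ 2 / 4 → m ≤ -deriv (prof n R s) t * S + (-prof n R s t) * T) := by
  obtain ⟨D, hD, hD'⟩ := smoothTransition_deriv_bound
  refine ⟨3 / 2 * 1 + (n + 1) * c, 3 * D * 2 ^ (n - 1), expNegInvGlue (R / 2) / 8, by positivity, by positivity,
    div_pos (expNegInvGlue.pos_of_pos (by positivity)) (by norm_num), ?_⟩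
  intro s t S T hs ht hST
  by_cases hz : t ≤ s ^ 2 / 2 ∨ R ^ 2 ≤ t
  · have hk : prof n R s t = 0 := by
      rcases hz with h | h
      · exact prof_zero_left hs h
      · exact prof_zero_right h
    rw [prof_deriv_zero hs hk, hk]
    have hs2 : 0 < s ^ 2 := by positivity
    simp only [neg_zero, zero_mul, add_zero, le_refl, implies_true, true_and]
    refine ⟨by positivity, by rw [neg_nonpos]; positivity, fun h1 h2 => ?_⟩
    exfalso
    have : 0 < R ^ 2 := by positivity
    rcases hz with h | h <;> linarith
  push Not at hz
  obtain ⟨hz1, hz2⟩ := hz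
  have hs2 : 0 < s ^ 2 := by positivity
  have ht0 : 0 < t := by linarith
  obtain ⟨hS, hT⟩ := hST hz2
  have htR : √t < R := by rwa [Real.sqrt_lt' hR]
  have hr : 0 < √t := Real.sqrt_pos.2 ht0
  have hrr : √t * √t = t := Real.mul_self_sqrt ht0.le
  rw [(prof_hasDerivAt ht0 htR).deriv]
  unfold prof
  set r := √t
  set G := expNegInvGlue (R - r) with hG
  set P := Real.smoothTransition (2 * t / s ^ 2 - 1) with hP
  set P' := deriv Real.smoothTransition (2 * t / s ^ 2 - 1) with hP'
  set y := (R - r)⁻¹ with hy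
  have hy0 : 0 < R - r := sub_pos.2 htR
  have hG0 : 0 < G := expNegInvGlue.pos_of_pos hy0
  have hG1 : G ≤ 1 := glue_le_one _
  have hGy : G * y ^ 2 ≤ 2 := glue_bound hy0
  have hP0 : 0 ≤ P := Real.smoothTransition.nonneg _
  have hP1 : P ≤ 1 := Real.smoothTransition.le_one _
  have hP'0 : 0 ≤ P' := (hD' _).1
  have hP'1 : P' ≤ D := (hD' _).2
  have hcr : c * r ≤ 1 / 2 := (mul_le_mul_of_nonneg_left htR.le hc).trans hcR
  have hS' : c * t * r ≤ t / 2 := by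
    have := mul_le_mul_of_nonneg_right hcr ht0.le
    linarith
  obtain ⟨hSa, hSb⟩ := abs_le.1 hS
  have hS1 : t / 2 ≤ S := by linarith
  have hS2 : S ≤ 3 / 2 * t := by linarith
  obtain ⟨e, he⟩ : ∃ e, e = n * S / t - T := ⟨_, rfl⟩
  have hec : |e| ≤ (n + 1) * c * r := by
    have : e = n * ((S - t) / t) - (T - n) := by rw [he]; field_simp; ring
    rw [this]
    have h1 : |(n:ℝ) * ((S - t) / t)| ≤ n * (c * r) := by
      rw [abs_mul, abs_div, abs_of_pos ht0, Nat.abs_cast]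
      refine mul_le_mul_of_nonneg_left ?_ (by positivity)
      rw [div_le_iff₀ ht0]; linarith
    calc _ ≤ |(n:ℝ) * ((S - t) / t)| + |T - n| := abs_sub _ _
      _ ≤ _ := by linarith
  obtain ⟨he1, he2⟩ := abs_le.1 hec
  have hy2 : 8 * ((n + 1) * c) ≤ y ^ 2 := by
    have h1 : 1 ≤ y * R := by
      rw [hy, inv_mul_eq_div, one_le_div hy0]; linarith
    have h2 : 1 ≤ y ^ 2 * R ^ 2 := by rw [← mul_pow]; exact one_le_pow₀ h1
    have hR2 : 0 < R ^ 2 := by positivity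
    by_contra hcon
    push Not at hcon
    have := mul_lt_mul_of_pos_right hcon hR2
    linarith
  have hform : -((-(G * y ^ 2 / (2 * r)) * P + G * (P' * (2 / s ^ 2))) * (t ^ n)⁻¹ -
      n * (G * P) * (t ^ n)⁻¹ / t) * S + -(G * P * (t ^ n)⁻¹) * T =
      (t ^ n)⁻¹ * (P * (G * y ^ 2 / (2 * r) * S + G * e)) - (t ^ n)⁻¹ * (G * P' * (2 / s ^ 2) * S) := by
    rw [he]; field_simp; ring
  rw [hform]
  have htn : 0 < (t ^ n)⁻¹ := by positivity
  have hS0 : 0 < S := by linarith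
  have hE : G * y ^ 2 / (2 * r) * S ≤ 3 / 2 * r := by
    have : G * y ^ 2 / (2 * r) * S = (G * y ^ 2) * S / (2 * r) := by ring
    rw [this, div_le_iff₀ (by positivity)]
    have h3 : G * y ^ 2 * S ≤ 2 * (3 / 2 * t) := mul_le_mul hGy hS2 hS0.le (by norm_num)
    linarith
  have hE2 : G * y ^ 2 * r / 4 ≤ G * y ^ 2 / (2 * r) * S := by
    have : G * y ^ 2 / (2 * r) * S = (G * y ^ 2) * S / (2 * r) := by ring
    rw [this, le_div_iff₀ (by positivity)]
    have h3 : G * y ^ 2 * (t / 2) ≤ G * y ^ 2 * S := mul_le_mul_of_nonneg_left hS1 (by positivity)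
    have h4 : G * y ^ 2 * r / 4 * (2 * r) = G * y ^ 2 * (t / 2) := by rw [← hrr]; ring
    linarith
  have hE3 : G * y ^ 2 * r / 8 ≤ G * y ^ 2 / (2 * r) * S + G * e := by
    have h1 : G * -e ≤ G * ((n + 1) * c * r) := mul_le_mul_of_nonneg_left (by linarith) hG0.le
    have h2 : G * r * (8 * ((n + 1) * c)) ≤ G * r * y ^ 2 := mul_le_mul_of_nonneg_left hy2 (by positivity)
    linarith
  have hbr0 : 0 ≤ G * y ^ 2 / (2 * r) * S + G * e := le_trans (by positivity) hE3
  have hlast : 0 ≤ (t ^ n)⁻¹ * (G * P' * (2 / s ^ 2) * S) := by positivity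
  have hfirst : 0 ≤ (t ^ n)⁻¹ * (P * (G * y ^ 2 / (2 * r) * S + G * e)) := by positivity
  have hlast0 : s ^ 2 ≤ t → P = 1 ∧ P' = 0 := by
    intro h
    have h1 : 1 ≤ 2 * t / s ^ 2 - 1 := by
      rw [le_sub_iff_add_le, le_div_iff₀ hs2]; linarith
    refine ⟨Real.smoothTransition.one_of_one_le h1, ?_⟩
    refine IsLocalMax.deriv_eq_zero (Filter.Eventually.of_forall fun x => ?_)
    rw [Real.smoothTransition.one_of_one_le h1]
    exact Real.smoothTransition.le_one x
  refine ⟨?_, ?_, ?_, ?_⟩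
  · have h1 : P * (G * y ^ 2 / (2 * r) * S + G * e) ≤ (3 / 2 * 1 + (n + 1) * c) * r := by
      have h2 : G * e ≤ (n + 1) * c * r := by
        calc G * e ≤ G * ((n + 1) * c * r) := mul_le_mul_of_nonneg_left he2 hG0.le
          _ ≤ 1 * ((n + 1) * c * r) := mul_le_mul_of_nonneg_right hG1 (by positivity)
          _ = _ := one_mul _
      calc _ ≤ 1 * (G * y ^ 2 / (2 * r) * S + G * e) := mul_le_mul_of_nonneg_right hP1 hbr0
        _ ≤ _ := by linarith
    have := mul_le_mul_of_nonneg_left h1 htn.le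
    linarith
  · suffices h : (t ^ n)⁻¹ * (G * P' * (2 / s ^ 2) * S) ≤ 3 * D * 2 ^ (n - 1) / s ^ (2 * n) by linarith
    rcases le_or_gt (s ^ 2) t with h | h
    · rw [(hlast0 h).2]; simp; positivity
    obtain ⟨p, rfl⟩ : ∃ p, n = p + 1 := ⟨n - 1, by omega⟩
    have h1 : G * P' * (2 / s ^ 2) * S ≤ D * (2 / s ^ 2) * (3 / 2 * t) := by
      gcongr
      calc G * P' ≤ 1 * D := mul_le_mul hG1 hP'1 hP'0 zero_le_one
        _ = D := one_mul _
    have h2 : (t ^ p)⁻¹ ≤ ((s ^ 2 / 2) ^ p)⁻¹ := by gcongr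
    calc (t ^ (p + 1))⁻¹ * (G * P' * (2 / s ^ 2) * S) ≤ (t ^ (p + 1))⁻¹ * (D * (2 / s ^ 2) * (3 / 2 * t)) :=
          mul_le_mul_of_nonneg_left h1 htn.le
      _ = (t ^ p)⁻¹ * (3 * D / s ^ 2) := by field_simp; ring
      _ ≤ ((s ^ 2 / 2) ^ p)⁻¹ * (3 * D / s ^ 2) := by gcongr
      _ = _ := by
        rw [div_pow, ← pow_mul]; simp only [Nat.add_sub_cancel, mul_add, pow_add]; field_simp
  · intro h
    rw [(hlast0 h).2]
    simpa using hfirst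
  · intro h h'
    rw [(hlast0 h).2, (hlast0 h).1]
    simp only [mul_zero, zero_mul, sub_zero, one_mul]
    have hr2 : r ≤ R / 2 := by
      rw [show r = √t from rfl, Real.sqrt_le_left (by positivity)]; linarith [div_pow R 2 2]
    have hG2 : expNegInvGlue (R / 2) ≤ G := expNegInvGlue.monotone (by linarith)
    have hy1 : 1 ≤ y ^ 2 := by
      have : 1 ≤ y := by rw [hy]; exact (one_le_inv₀ hy0).2 (by linarith)
      exact one_le_pow₀ this
    have hr1 : r ≤ 1 := by linarith
    have ht1 : t ≤ r := by
      have := mul_le_mul_of_nonneg_left hr1 hr.le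
      linarith
    have htn1 : 1 ≤ (t ^ n)⁻¹ * r := by
      rw [inv_mul_eq_div, one_le_div (by positivity)]
      exact (pow_le_of_le_one ht0.le (by linarith) (by omega)).trans ht1
    have hg0 := expNegInvGlue.nonneg (R / 2)
    calc expNegInvGlue (R / 2) / 8 ≤ G * y ^ 2 / 8 * ((t ^ n)⁻¹ * r) := by
          have : expNegInvGlue (R / 2) / 8 ≤ G * y ^ 2 / 8 := by
            have := mul_le_mul_of_nonneg_left hy1 hG0.le
            linarith
          have h9 := mul_le_mul_of_nonneg_left htn1 (show 0 ≤ G * y ^ 2 / 8 by positivity)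
          linarith
      _ = (t ^ n)⁻¹ * (G * y ^ 2 * r / 8) := by ring
      _ ≤ _ := mul_le_mul_of_nonneg_left hE3 htn.le


/-- Coefficient matrix of the form. -/
noncomputable def cMat {n : ℕ} (A : AlphaForm n) (z : Cn n) : Matrix (Fin n) (Fin n) ℂ :=
  Matrix.of fun j k => A.coeff j k z

/-- Transposed inverse of the coefficient matrix. -/
noncomputable def bMat {n : ℕ} (A : AlphaForm n) (z : Cn n) (j k : Fin n) : ℂ := (cMat A z)⁻¹ k j

lemma cMat_det {n : ℕ} (A : AlphaForm n) (z : Cn n) : (cMat A z).det ≠ 0 := by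
  intro h
  obtain ⟨v, hv, hv0⟩ := Matrix.exists_vecMul_eq_zero_iff.2 h
  have h1 := A.strictlyPositive z v hv
  have h2 : ∑ j, ∑ k, A.coeff j k z * v j * (starRingEnd ℂ) (v k) = 0 := by
    rw [Finset.sum_comm]
    refine Finset.sum_eq_zero fun k _ => ?_
    have := congrFun hv0 k
    simp only [Matrix.vecMul, dotProduct, cMat, Matrix.of_apply, Pi.zero_apply] at this
    rw [← Finset.sum_mul]
    simp [mul_comm, this]
  rw [h2] at h1; simp at h1

lemma bMat_herm {n : ℕ} (A : AlphaForm n) (z : Cn n) (j k : Fin n) :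
    bMat A z k j = (starRingEnd ℂ) (bMat A z j k) := by
  have h : (cMat A z).IsHermitian := by
    ext j k
    simp [cMat, Matrix.conjTranspose_apply, A.hermitian k j z]
  have := h.inv
  exact (this.apply j k).symm

lemma bMat_left {n : ℕ} (A : AlphaForm n) (z : Cn n) (k l : Fin n) :
    ∑ j, A.coeff j k z * bMat A z j l = if l = k then 1 else 0 := by
  have h := congrFun (congrFun (Matrix.nonsing_inv_mul (cMat A z) (isUnit_iff_ne_zero.2 (cMat_det A z))) l) k
  rw [Matrix.mul_apply, Matrix.one_apply] at h
  rw [← h]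
  exact Finset.sum_congr rfl fun j _ => by simp [bMat, cMat, mul_comm]

lemma bMat_trace {n : ℕ} (A : AlphaForm n) (z : Cn n) :
    ∑ j, ∑ k, A.coeff j k z * bMat A z j k = n := by
  rw [Finset.sum_comm]
  simp [bMat_left]

lemma bMat_Q {n : ℕ} (A : AlphaForm n) (z x : Cn n) (k : Fin n) :
    ∑ j, A.coeff j k z * hQ (bMat A z) j x = (starRingEnd ℂ) (x k) := by
  simp only [hQ, Finset.mul_sum, ← mul_assoc]
  rw [Finset.sum_comm]
  simp [← Finset.sum_mul, bMat_left]

lemma bMat_quad {n : ℕ} (A : AlphaForm n) (z x : Cn n) :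
    ∑ j, ∑ k, A.coeff j k z * hQ (bMat A z) j x * (starRingEnd ℂ) (hQ (bMat A z) k x) =
      (hq (bMat A z) x : ℂ) := by
  rw [Finset.sum_comm]
  simp only [← Finset.sum_mul, bMat_Q]
  rw [← Complex.conj_ofReal, hq_coe (bMat_herm A z)]
  simp

lemma bMat_pos {n : ℕ} (A : AlphaForm n) (z x : Cn n) (hx : x ≠ 0) : 0 < hq (bMat A z) x := by
  have h := A.strictlyPositive z (fun j => hQ (bMat A z) j x) (fun h => hx ?_)
  · rw [bMat_quad] at h
    simpa using h
  · funext k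
    have h1 := bMat_Q A z x k
    simp only [fun j => congrFun h j, Pi.zero_apply, mul_zero, Finset.sum_const_zero] at h1
    simpa using h1.symm

lemma bMat_continuous {n : ℕ} (A : AlphaForm n) (j k : Fin n) : Continuous fun z => bMat A z j k := by
  have hM : Continuous (cMat A) := continuous_matrix fun j k => (A.contDiff j k).continuous
  have : (fun z => bMat A z j k) = fun z => ((cMat A z).det)⁻¹ * (cMat A z).adjugate k j := by
    funext z
    simp [bMat, Matrix.inv_def]
  rw [this]
  exact (hM.matrix_det.inv₀ (cMat_det A)).mul (hM.matrix_adjugate.matrix_elem k j)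

lemma hQ_bound {n : ℕ} {B : Fin n → Fin n → ℂ} {b : ℝ} (hb : ∀ j k, ‖B j k‖ ≤ b) (j : Fin n) (x : Cn n) :
    ‖hQ B j x‖ ≤ n * b * ‖x‖ := by
  unfold hQ
  refine (norm_sum_le _ _).trans ?_
  calc ∑ k, ‖B j k * (starRingEnd ℂ) (x k)‖ ≤ ∑ _k : Fin n, b * ‖x‖ := by
        refine Finset.sum_le_sum fun k _ => ?_
        rw [norm_mul, RCLike.norm_conj]
        exact mul_le_mul (hb j k) (norm_le_pi_norm x k) (norm_nonneg _) ((norm_nonneg _).trans (hb j k))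
    _ = _ := by simp; ring

lemma hq_bound {n : ℕ} {B : Fin n → Fin n → ℂ} {b : ℝ} (hb : ∀ j k, ‖B j k‖ ≤ b) (x : Cn n) :
    hq B x ≤ n * (n * b) * ‖x‖ ^ 2 := by
  unfold hq
  refine (re_le_norm _).trans ((norm_sum_le _ _).trans ?_)
  calc ∑ j, ‖x j * hQ B j x‖ ≤ ∑ _j : Fin n, ‖x‖ * (n * b * ‖x‖) := by
        refine Finset.sum_le_sum fun k _ => ?_
        rw [norm_mul]
        exact mul_le_mul (norm_le_pi_norm x k) (hQ_bound hb k x) (norm_nonneg _) (norm_nonneg _)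
    _ = _ := by simp; ring

lemma hq_smul {n : ℕ} (B : Fin n → Fin n → ℂ) (r : ℝ) (x : Cn n) : hq B (r • x) = r ^ 2 * hq B x := by
  unfold hq
  have : ∑ j, (r • x) j * hQ B j (r • x) = ((r ^ 2 : ℝ) : ℂ) * ∑ j, x j * hQ B j x := by
    simp only [hQ, Finset.mul_sum, Pi.smul_apply, real_smul, map_mul, conj_ofReal, ofReal_pow]
    exact Finset.sum_congr rfl fun i _ => Finset.sum_congr rfl fun k _ => by ring
  rw [this, re_ofReal_mul]

lemma frozen {n : ℕ} (A : AlphaForm n) (z0 : Cn n) :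
    ∃ c lam Lam : ℝ, 0 ≤ c ∧ 0 < lam ∧ 0 < Lam ∧ ∀ z' ∈ closedBall z0 1,
      (∀ x, lam ^ 2 * ‖x‖ ^ 2 ≤ hq (bMat A z') x) ∧ (∀ x, hq (bMat A z') x ≤ Lam ^ 2 * ‖x‖ ^ 2) ∧
      ∀ z ∈ closedBall z0 1,
        |(∑ j, ∑ k, A.coeff j k z * hQ (bMat A z') j (z - z') *
          (starRingEnd ℂ) (hQ (bMat A z') k (z - z'))).re - hq (bMat A z') (z - z')| ≤
            c * hq (bMat A z') (z - z') * √(hq (bMat A z') (z - z')) ∧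
        |(∑ j, ∑ k, A.coeff j k z * bMat A z' j k).re - n| ≤ c * √(hq (bMat A z') (z - z')) := by
  have hb : ∃ b : ℝ, 0 ≤ b ∧ ∀ z' ∈ closedBall z0 1, ∀ j k, ‖bMat A z' j k‖ ≤ b := by
    have : ∀ j k, ∃ b, ∀ z' ∈ closedBall z0 1, ‖bMat A z' j k‖ ≤ b := fun j k =>
      (isCompact_closedBall z0 1).exists_bound_of_continuousOn (bMat_continuous A j k).continuousOn
    choose b hb using this
    refine ⟨∑ j, ∑ k, |b j k|, by positivity, fun z' hz j k => (hb j k z' hz).trans ((le_abs_self _).trans ?_)⟩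
    exact (Finset.single_le_sum (f := fun k => |b j k|) (fun _ _ => abs_nonneg _) (Finset.mem_univ k)).trans
      (Finset.single_le_sum (f := fun j => ∑ k, |b j k|) (fun _ _ => by positivity) (Finset.mem_univ j))
  obtain ⟨b, hb0, hb⟩ := hb
  have hl : ∃ l : ℝ, 0 ≤ l ∧ ∀ z ∈ closedBall z0 1, ∀ z' ∈ closedBall z0 1, ∀ j k,
      ‖A.coeff j k z - A.coeff j k z'‖ ≤ l * ‖z - z'‖ := by
    have : ∀ j k, ∃ K, LipschitzOnWith K (A.coeff j k) (closedBall z0 1) := fun j k =>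
      (A.contDiff j k).contDiffOn.exists_lipschitzOnWith one_ne_zero (convex_closedBall z0 1) (isCompact_closedBall z0 1)
    choose K hK using this
    refine ⟨∑ j, ∑ k, (K j k : ℝ), by positivity, fun z hz z' hz' j k => ?_⟩
    have h1 := (hK j k).dist_le_mul z hz z' hz'
    rw [dist_eq_norm, dist_eq_norm] at h1
    refine h1.trans (mul_le_mul_of_nonneg_right ?_ (norm_nonneg _))
    exact (Finset.single_le_sum (f := fun k => (K j k : ℝ)) (fun _ _ => by positivity) (Finset.mem_univ k)).trans
      (Finset.single_le_sum (f := fun j => ∑ k, (K j k : ℝ)) (fun _ _ => by positivity) (Finset.mem_univ j))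
  obtain ⟨l, hl0, hl⟩ := hl
  have hlam : ∃ lam : ℝ, 0 < lam ∧ ∀ z' ∈ closedBall z0 1, ∀ x, lam * ‖x‖ ^ 2 ≤ hq (bMat A z') x := by
    have hcont : Continuous fun p : Cn n × Cn n => hq (bMat A p.1) p.2 := by
      unfold hq hQ
      have := fun j k => (bMat_continuous A j k)
      fun_prop
    obtain ⟨a, ha, ha'⟩ := ((isCompact_closedBall z0 1).prod (isCompact_sphere (0 : Cn n) 1)).exists_forall_le'
      hcont.continuousOn (a := 0) (fun p hp => bMat_pos A p.1 p.2 (by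
        rintro h
        have := hp.2
        rw [h] at this; simp at this))
    refine ⟨a, ha, fun z' hz' x => ?_⟩
    by_cases hx : x = 0
    · subst hx; simp [hq]
    have hx' : 0 < ‖x‖ := norm_pos_iff.2 hx
    have h1 := ha' (z', (‖x‖⁻¹ : ℝ) • x) ⟨hz', by simp [norm_smul, hx'.ne']⟩
    simp only [hq_smul] at h1
    rw [inv_pow, inv_mul_eq_div, le_div_iff₀ (by positivity)] at h1
    exact h1
  obtain ⟨a, ha, ha'⟩ := hlam
  set lam := √a
  have hlam0 : 0 < lam := Real.sqrt_pos.2 ha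
  have hlam2 : lam ^ 2 = a := Real.sq_sqrt ha.le
  set Lam := √(n * (n * b) + 1)
  have hLam0 : 0 < Lam := Real.sqrt_pos.2 (by positivity)
  have hLam2 : Lam ^ 2 = n * (n * b) + 1 := Real.sq_sqrt (by positivity)
  set c1 := n * (n * (l * (n * b) ^ 2)) with hc1
  set c2 := n * (n * (l * b)) with hc2
  have hc10 : 0 ≤ c1 := by positivity
  have hc20 : 0 ≤ c2 := by positivity
  refine ⟨c1 / lam ^ 3 + c2 / lam, lam, Lam, by positivity, hlam0, hLam0, fun z' hz' => ⟨?_, ?_, ?_⟩⟩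
  · intro x; rw [hlam2]; exact ha' z' hz' x
  · intro x
    refine (hq_bound (hb z' hz') x).trans ?_
    rw [hLam2]
    exact mul_le_mul_of_nonneg_right (by linarith) (by positivity)
  intro z hz
  set x := z - z'
  set q := hq (bMat A z') x
  have hxq : lam * ‖x‖ ≤ √q := by
    apply Real.le_sqrt_of_sq_le
    rw [mul_pow, hlam2]; exact ha' z' hz' x
  have hq0 : 0 ≤ q := le_trans (by positivity) (ha' z' hz' x)
  have hxq' : ‖x‖ ≤ √q / lam := by rw [le_div_iff₀ hlam0]; linarith
  have hqq : √q ^ 2 = q := Real.sq_sqrt hq0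
  have hsum : ∀ (f g : Fin n → Fin n → ℂ) (e : ℝ), (∀ j k, ‖f j k - g j k‖ ≤ e) →
      |(∑ j, ∑ k, f j k).re - (∑ j, ∑ k, g j k).re| ≤ n * (n * e) := by
    intro f g e he
    rw [← sub_re, ← Finset.sum_sub_distrib]
    refine (abs_re_le_norm _).trans ((norm_sum_le _ _).trans ?_)
    calc _ ≤ ∑ _j : Fin n, ((n : ℝ) * e) := by
          refine Finset.sum_le_sum fun j _ => ?_
          rw [← Finset.sum_sub_distrib]
          refine (norm_sum_le _ _).trans ?_
          calc _ ≤ ∑ _k : Fin n, e := Finset.sum_le_sum fun k _ => he j k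
            _ = _ := by simp
      _ = _ := by simp
  constructor
  · have h1 := hsum (fun j k => A.coeff j k z * hQ (bMat A z') j x * (starRingEnd ℂ) (hQ (bMat A z') k x))
      (fun j k => A.coeff j k z' * hQ (bMat A z') j x * (starRingEnd ℂ) (hQ (bMat A z') k x))
      (l * ‖x‖ * (n * b * ‖x‖) * (n * b * ‖x‖)) (fun j k => by
        rw [← sub_mul, ← sub_mul, norm_mul, norm_mul, RCLike.norm_conj]
        gcongr
        · exact hl z hz z' hz' j k
        · exact hQ_bound (hb z' hz') j x
        · exact hQ_bound (hb z' hz') k x)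
    rw [bMat_quad, ofReal_re] at h1
    refine h1.trans ?_
    calc _ = c1 * ‖x‖ ^ 3 := by rw [hc1]; ring
      _ ≤ c1 * (√q / lam) ^ 3 := by gcongr
      _ = c1 / lam ^ 3 * q * √q := by
        rw [div_pow, show √q ^ 3 = q * √q by rw [← hqq]; simp; ring]; ring
      _ ≤ _ := by
        have : 0 ≤ c2 / lam * q * √q := by positivity
        linarith
  · have h1 := hsum (fun j k => A.coeff j k z * bMat A z' j k)
      (fun j k => A.coeff j k z' * bMat A z' j k)
      (l * ‖x‖ * b) (fun j k => by
        rw [← sub_mul, norm_mul]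
        gcongr
        · exact hl z hz z' hz' j k
        · exact hb z' hz' j k)
    rw [bMat_trace, natCast_re] at h1
    refine h1.trans ?_
    calc _ = c2 * ‖x‖ := by rw [hc2]; ring
      _ ≤ c2 * (√q / lam) := by gcongr
      _ = c2 / lam * √q := by ring
      _ ≤ _ := by
        have : 0 ≤ c1 / lam ^ 3 * √q := by positivity
        linarith


lemma hq_contDiff {n : ℕ} (B : Fin n → Fin n → ℂ) : ContDiff ℝ (⊤ : ℕ∞) (hq B) := by
  unfold hq hQ
  have h1 : ∀ j : Fin n, ContDiff ℝ (⊤ : ℕ∞) (fun x : Cn n => x j) := fun j => contDiff_apply ℝ ℂ j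
  have h2 : ∀ j : Fin n, ContDiff ℝ (⊤ : ℕ∞) (fun x : Cn n => (starRingEnd ℂ) (x j)) :=
    fun j => conjCLE.contDiff.comp (h1 j)
  refine reCLM.contDiff.comp (ContDiff.sum fun j _ => (h1 j).mul (ContDiff.sum fun k _ => ?_))
  exact contDiff_const.mul (h2 k)

lemma pow_aux {n : ℕ} (hn : 1 ≤ n) {l x t : ℝ} (hl : 0 < l) (hx : 0 ≤ x) (h : l ^ 2 * x ^ 2 ≤ t)
    (h0 : x = 0 → t = 0) :
    √t * (t ^ n)⁻¹ ≤ (l ^ (2 * n - 1))⁻¹ * (x ^ (2 * n - 1))⁻¹ := by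
  rcases hx.eq_or_lt with rfl | hx
  · rw [h0 rfl]; simp; positivity
  · have hlx : 0 < l * x := by positivity
    have hy : l * x ≤ √t := Real.le_sqrt_of_sq_le (by rw [mul_pow]; exact h)
    have hy0 : 0 < √t := hlx.trans_le hy
    have ht : t = √t ^ 2 := (Real.sq_sqrt (le_trans (by positivity) h)).symm
    have e : √t * (t ^ n)⁻¹ = (√t ^ (2 * n - 1))⁻¹ := by
      have : t ^ n = √t ^ (2 * n - 1) * √t := by
        rw [← pow_succ, show 2 * n - 1 + 1 = 2 * n by omega, pow_mul, ← ht]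
      rw [this]; field_simp
    rw [e, ← mul_inv, ← mul_pow]
    gcongr

set_option maxHeartbeats 1000000 in
/-- The kernel lemma. -/
lemma kernel {n : ℕ} (hn : 1 ≤ n) (A : AlphaForm n) (z0 : Cn n) {r : ℝ} (hr : 0 < r) (hr1 : r ≤ 1 / 2) :
    ∃ C K m s0 : ℝ, 0 ≤ C ∧ 0 ≤ K ∧ 0 < m ∧ 0 < s0 ∧ ∀ z' ∈ closedBall z0 (1 / 2), ∀ s, 0 < s → s < s0 →
      ∃ ω : Cn n → ℝ, ContDiff ℝ (⊤ : ℕ∞) ω ∧ HasCompactSupport ω ∧ tsupport ω ⊆ closedBall z' r ∧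
        (∀ z, 0 ≤ ω z) ∧ (∀ x, alphaOpR A ω x ≤ C * (‖x - z'‖ ^ (2 * n - 1))⁻¹) ∧
        (∀ x, -(K / s ^ (2 * n)) ≤ alphaOpR A ω x) ∧
        (∀ x, x ∉ closedBall z' s → 0 ≤ alphaOpR A ω x) ∧
        m ≤ ∫ x, max (alphaOpR A ω x) 0 := by
  obtain ⟨c, lam, Lam, hc, hlam, hLam, hfr⟩ := frozen A z0
  obtain ⟨R, hR, hR1, hcR, hcR2, hRr⟩ : ∃ R : ℝ, 0 < R ∧ R ≤ 1 ∧ c * R ≤ 1 / 2 ∧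
      8 * (n + 1) * c * R ^ 2 ≤ 1 ∧ R ≤ r * lam := by
    have hd : (0:ℝ) < 8 * (n + 1) * (c + 1) := by positivity
    refine ⟨min 1 (min (1 / (8 * (n + 1) * (c + 1))) (r * lam)), by positivity, min_le_left _ _, ?_, ?_,
      (min_le_right _ _).trans (min_le_right _ _)⟩
    all_goals
      set R := min 1 (min (1 / (8 * ((n:ℝ) + 1) * (c + 1))) (r * lam)) with hRdef
      have h0 : 0 < R := by positivity
      have h1 : R ≤ 1 := min_le_left _ _
      have h2 : R ≤ 1 / (8 * ((n:ℝ) + 1) * (c + 1)) := (min_le_right _ _).trans (min_le_left _ _)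
      rw [le_div_iff₀ hd] at h2
      have hn0 : (0:ℝ) ≤ n := Nat.cast_nonneg n
    · have : 0 ≤ R * n * c := by positivity
      have : 0 ≤ R * n := by positivity
      have : 0 ≤ R * c := by positivity
      nlinarith
    · have : 8 * (n + 1) * c * R ^ 2 ≤ 8 * (n + 1) * c * R := by
        gcongr; nlinarith
      have : 0 ≤ R * n := by positivity
      nlinarith
  obtain ⟨C, K, m, hC, hK, hm, hpb⟩ := prof_bounds hn hc hR hR1 hcR hcR2
  have : Nonempty (Fin n) := ⟨⟨0, hn⟩⟩
  set a : ℝ := R / (2 * Lam) with ha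
  have ha0 : 0 < a := by positivity
  set U : Set (Cn n) := ball 0 a \ closedBall 0 (a / 2) with hU
  have hUo : IsOpen U := isOpen_ball.sdiff isClosed_closedBall
  have hUne : U.Nonempty := by
    obtain ⟨x, hx⟩ := exists_norm_eq (Cn n) (c := 3 * a / 4) (by positivity)
    refine ⟨x, ?_, ?_⟩
    · rw [mem_ball_zero_iff, hx]; linarith
    · rw [mem_closedBall_zero_iff, hx]; linarith
  have hUfin : volume U ≠ ⊤ := ne_top_of_le_ne_top measure_ball_lt_top.ne (measure_mono Set.sdiff_subset)
  have hUpos : 0 < volume.real U := ENNReal.toReal_pos (hUo.measure_pos volume hUne).ne' hUfin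
  refine ⟨C * (lam ^ (2 * n - 1))⁻¹, K / lam ^ (2 * n), m * volume.real U, a / 2, by positivity, by positivity,
    by positivity, by positivity, ?_⟩
  intro z' hz' s hs hs0
  have hz1 : z' ∈ closedBall z0 1 := closedBall_subset_closedBall (by norm_num) hz'
  obtain ⟨hlo, hup, hST⟩ := hfr z' hz1
  have hs' : 0 < lam * s := by positivity
  set B := bMat A z' with hB
  set ω : Cn n → ℝ := fun w => primF n R (lam * s) (hq B (w - z')) with hω
  have hωs : ContDiff ℝ (⊤ : ℕ∞) ω :=
    (primF_contDiff hs').comp ((hq_contDiff B).comp (contDiff_id.sub contDiff_const))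
  have hin : ∀ x, hq B (x - z') < R ^ 2 → x ∈ closedBall z' r := by
    intro x hx
    rw [mem_closedBall, dist_eq_norm]
    have h1 := (hlo (x - z')).trans_lt hx
    rw [← mul_pow] at h1
    have h2 := lt_of_pow_lt_pow_left₀ 2 hR.le h1
    have h3 : lam * ‖x - z'‖ < lam * r := by linarith
    exact (lt_of_mul_lt_mul_left h3 hlam.le).le
  have hsupp : tsupport ω ⊆ closedBall z' r := by
    refine closure_minimal (fun x hx => hin x ?_) isClosed_closedBall
    by_contra hcon
    exact hx (primF_zero (not_lt.1 hcon))
  have hωc : HasCompactSupport ω := (isCompact_closedBall z' r).of_isClosed_subset (isClosed_tsupport _) hsupp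
  have hform : ∀ x, alphaOpR A ω x = -deriv (prof n R (lam * s)) (hq B (x - z')) *
      (∑ j, ∑ k, A.coeff j k x * hQ B j (x - z') * (starRingEnd ℂ) (hQ B k (x - z'))).re +
      (-prof n R (lam * s) (hq B (x - z'))) * (∑ j, ∑ k, A.coeff j k x * B j k).re := by
    intro x
    have := alphaOp_radial A (bMat_herm A z') z' (primF_hasDerivAt (n := n) (R := R) hs')
      (prof_deriv_hasDerivAt hs') x
    unfold alphaOpR
    rw [hω, this, add_re, re_ofReal_mul, re_ofReal_mul]
  have ht0 : ∀ x, 0 ≤ hq B (x - z') := fun x => le_trans (by positivity) (hlo (x - z'))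
  have hb : ∀ x, _ := fun x => hpb (lam * s) (hq B (x - z'))
      (∑ j, ∑ k, A.coeff j k x * hQ B j (x - z') * (starRingEnd ℂ) (hQ B k (x - z'))).re
      (∑ j, ∑ k, A.coeff j k x * B j k).re hs' (ht0 x) (fun hx => hST x (by
        have h1 := mem_closedBall.1 (hin x hx)
        have h2 := mem_closedBall.1 hz'
        have := dist_triangle x z' z0
        rw [mem_closedBall]; linarith))
  simp only [← hform] at hb
  obtain ⟨hcont, -, hcs, -⟩ := alphaOpR_facts A hωs hωc
  refine ⟨ω, hωs, hωc, hsupp, fun z => primF_nonneg hs' _, fun x => ?_, fun x => ?_, fun x hx => ?_, ?_⟩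
  · refine (hb x).1.trans ?_
    rw [mul_assoc]
    refine mul_le_mul_of_nonneg_left ?_ hC
    refine pow_aux hn hlam (norm_nonneg _) (hlo _) fun h => ?_
    have := hup (x - z')
    rw [h] at this
    exact le_antisymm (by simpa using this) (ht0 x)
  · refine le_trans (le_of_eq ?_) (hb x).2.1
    rw [mul_pow]; field_simp
  · refine (hb x).2.2.1 ?_
    rw [mem_closedBall, dist_eq_norm, not_le] at hx
    refine le_trans ?_ (hlo _)
    rw [mul_pow]; gcongr
  · have hintg : Integrable (fun x => max (alphaOpR A ω x) 0) := by
      refine (hcont.max continuous_const).integrable_of_hasCompactSupport ?_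
      exact hcs.comp_left (g := fun y : ℝ => max y 0) (by simp)
    set V : Set (Cn n) := (fun x => x + -z') ⁻¹' U with hV
    have hVm : volume V = volume U := measure_preimage_add_right volume (-z') U
    have hVmeas : MeasurableSet V := (hUo.preimage (continuous_id.add continuous_const)).measurableSet
    calc m * volume.real U = ∫ x in V, m := by
          rw [setIntegral_const, Measure.real, Measure.real, hVm, smul_eq_mul, mul_comm]
      _ ≤ ∫ x in V, max (alphaOpR A ω x) 0 := by
          refine setIntegral_mono_on (integrableOn_const (by rw [hVm]; exact hUfin)) hintg.integrableOn hVmeas ?_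
          intro x hx
          refine le_max_of_le_left ((hb x).2.2.2 ?_ ?_)
          · have h1 : a / 2 < ‖x - z'‖ := by
              have := hx.2
              rw [mem_closedBall_zero_iff, not_le] at this
              rw [sub_eq_add_neg]; exact this
            refine le_trans ?_ (hlo _)
            rw [mul_pow]
            have : s ≤ ‖x - z'‖ := by linarith
            gcongr
          · have h1 : ‖x - z'‖ < a := by
              rw [sub_eq_add_neg]; exact mem_ball_zero_iff.1 hx.1
            refine (hup _).trans ?_
            calc Lam ^ 2 * ‖x - z'‖ ^ 2 ≤ Lam ^ 2 * a ^ 2 := by gcongr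
              _ = R ^ 2 / 4 := by rw [ha]; field_simp; norm_num
      _ ≤ ∫ x, max (alphaOpR A ω x) 0 :=
          setIntegral_le_integral hintg (Eventually.of_forall fun x => le_max_right _ _)


lemma mv_step {n : ℕ} {w h : Cn n → ℝ} {z' : Cn n} {c m s κ : ℝ} (hw : Integrable w)
    (hh : Continuous h) (hc : HasCompactSupport h) (h0 : ∫ x, h x = 0) (hpos : 0 ≤ ∫ x, w x * h x)
    (hm : m ≤ ∫ x, max (h x) 0) (hκ : ∀ x, -κ ≤ h x) (hκ0 : 0 ≤ κ)
    (hoff : ∀ x, x ∉ closedBall z' s → 0 ≤ h x) (hcw : c ≤ w z') :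
    m * (w z' - c) ≤ (∫ x, max (w x - c) 0 * max (h x) 0) + κ * ∫ x in closedBall z' s, ‖w x - w z'‖ := by
  obtain ⟨b, hb⟩ := hc.exists_bound_of_continuous hh
  have hhi : Integrable h := hh.integrable_of_hasCompactSupport hc
  have hhm : AEStronglyMeasurable h := hh.aestronglyMeasurable
  have hpi : Integrable (fun x => max (h x) 0) := hhi.pos_part
  have hwh : Integrable (fun x => w x * h x) := hw.mul_bdd (c := b) hhm (Eventually.of_forall hb)
  have hwp : Integrable (fun x => max (w x - c) 0 * max (h x) 0) := by
    have h1 : Integrable (fun x => w x * max (h x) 0) := by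
      refine hw.mul_bdd (c := b) hpi.aestronglyMeasurable (Eventually.of_forall fun x => ?_)
      refine le_trans ?_ (hb x)
      rw [Real.norm_eq_abs, abs_of_nonneg (le_max_right _ _), Real.norm_eq_abs]
      exact max_le (le_abs_self _) (abs_nonneg _)
    have h2 := (h1.sub (hpi.const_mul c)).pos_part
    refine h2.congr (Eventually.of_forall fun x => ?_)
    simp only [Pi.sub_apply]
    rw [← sub_mul]
    have := le_max_right (h x) 0
    rw [max_mul_of_nonneg _ _ this, zero_mul]
  have hB : Integrable ((closedBall z' s).indicator fun x => ‖w x - w z'‖) := by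
    rw [integrable_indicator_iff measurableSet_closedBall]
    exact (hw.integrableOn.sub (integrableOn_const measure_closedBall_lt_top.ne)).norm
  have key : ∀ x, w x * h x - c * h x ≤ max (w x - c) 0 * max (h x) 0 +
      κ * (closedBall z' s).indicator (fun x => ‖w x - w z'‖) x - (w z' - c) * max (h x) 0 +
        (w z' - c) * h x := by
    intro x
    by_cases hx : 0 ≤ h x
    · rw [max_eq_left hx]
      have h1 : (w x - c) * h x ≤ max (w x - c) 0 * h x := by gcongr; exact le_max_left _ _
      have h2 : 0 ≤ κ * (closedBall z' s).indicator (fun x => ‖w x - w z'‖) x :=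
        mul_nonneg hκ0 (Set.indicator_nonneg (fun _ _ => norm_nonneg _) _)
      linarith
    · have hxm : x ∈ closedBall z' s := by
        by_contra hcon; exact hx (hoff x hcon)
      push Not at hx
      rw [max_eq_right hx.le, Set.indicator_of_mem hxm]
      have h1 : (w x - w z') * h x ≤ ‖w x - w z'‖ * κ := by
        refine (le_abs_self _).trans ?_
        rw [abs_mul, Real.norm_eq_abs]
        gcongr
        rw [abs_of_neg hx]; linarith [hκ x]
      linarith
  have hintg := integral_mono (hwh.sub (hhi.const_mul c))
    (((hwp.add (hB.const_mul κ)).sub (hpi.const_mul (w z' - c))).add (hhi.const_mul (w z' - c))) key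
  have e1 : ∫ x, (w x * h x - c * h x) = ∫ x, w x * h x := by
    rw [integral_sub hwh (hhi.const_mul c), integral_const_mul, h0]; simp
  have e2 : ∫ x, (max (w x - c) 0 * max (h x) 0 +
      κ * (closedBall z' s).indicator (fun x => ‖w x - w z'‖) x - (w z' - c) * max (h x) 0 +
        (w z' - c) * h x) = (∫ x, max (w x - c) 0 * max (h x) 0) +
      κ * (∫ x in closedBall z' s, ‖w x - w z'‖) - (w z' - c) * ∫ x, max (h x) 0 := by
    have i1 : Integrable (fun x => κ * (closedBall z' s).indicator (fun x => ‖w x - w z'‖) x) :=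
      hB.const_mul κ
    have i2 : Integrable (fun x => max (w x - c) 0 * max (h x) 0 +
      κ * (closedBall z' s).indicator (fun x => ‖w x - w z'‖) x) := hwp.add i1
    have i3 : Integrable (fun x => max (w x - c) 0 * max (h x) 0 +
      κ * (closedBall z' s).indicator (fun x => ‖w x - w z'‖) x - (w z' - c) * max (h x) 0) :=
      i2.sub (hpi.const_mul (w z' - c))
    rw [integral_add i3 (hhi.const_mul (w z' - c)), integral_sub i2 (hpi.const_mul (w z' - c)),
      integral_add hwp i1, integral_const_mul, integral_const_mul, integral_const_mul, h0,
      integral_indicator measurableSet_closedBall]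
    simp
  have h3 : ∫ x, (w x * h x - c * h x) ≤ ∫ x, (max (w x - c) 0 * max (h x) 0 +
      κ * (closedBall z' s).indicator (fun x => ‖w x - w z'‖) x - (w z' - c) * max (h x) 0 +
        (w z' - c) * h x) := hintg
  rw [e1, e2] at h3
  have h4 : (w z' - c) * m ≤ (w z' - c) * ∫ x, max (h x) 0 :=
    mul_le_mul_of_nonneg_left hm (sub_nonneg.2 hcw)
  linarith

lemma finrank_Cn (n : ℕ) : Module.finrank ℝ (Cn n) = 2 * n := by
  simp [Cn, Module.finrank_pi_fintype, mul_comm]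

lemma kint {n : ℕ} (hn : 1 ≤ n) (ρ : ℝ) :
    IntegrableOn (fun y : Cn n => (‖y‖ ^ (2 * n - 1))⁻¹) (ball 0 ρ) := by
  have : Nonempty (Fin n) := ⟨⟨0, hn⟩⟩
  rw [integrableOn_fun_norm_addHaar (E := Cn n) volume (f := fun y : ℝ => (y ^ (2 * n - 1))⁻¹), finrank_Cn]
  have h1 : IntegrableOn (fun _ : ℝ => (1:ℝ)) (Set.Ioo 0 ρ) := integrableOn_const (by simp)
  refine h1.congr_fun (fun y hy => ?_) measurableSet_Ioo
  have : y ≠ 0 := hy.1.ne'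
  simp [this]

lemma kint_small {n : ℕ} (hn : 1 ≤ n) {η r : ℝ} (hη : 0 < η) (hr : 0 < r) :
    ∃ ρ : ℝ, 0 < ρ ∧ ρ ≤ r ∧ ∫ y in ball (0 : Cn n) ρ, (‖y‖ ^ (2 * n - 1))⁻¹ < η := by
  have : Nonempty (Fin n) := ⟨⟨0, hn⟩⟩
  have hpos : ∀ j : ℕ, 0 < r / (j + 1) := fun j => by positivity
  have h := tendsto_setIntegral_of_antitone (μ := (volume : Measure (Cn n)))
    (f := fun y : Cn n => (‖y‖ ^ (2 * n - 1))⁻¹)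
    (s := fun j : ℕ => ball (0 : Cn n) (r / (j + 1))) (fun _ => measurableSet_ball)
    (fun i j hij => ball_subset_ball (by gcongr)) ⟨0, kint hn _⟩
  have hI : ⋂ j : ℕ, ball (0 : Cn n) (r / (j + 1)) = {0} := by
    ext x
    simp only [Set.mem_iInter, mem_ball_zero_iff, Set.mem_singleton_iff]
    constructor
    · intro hx
      have h1 : Tendsto (fun j : ℕ => r / ((j : ℝ) + 1)) atTop (𝓝 0) := by
        have := tendsto_one_div_add_atTop_nhds_zero_nat (𝕜 := ℝ)
        simpa [div_eq_mul_inv] using this.const_mul r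
      have := ge_of_tendsto' h1 fun j => (hx j).le
      simpa using this
    · rintro rfl j; simpa using hpos j
  rw [hI, setIntegral_measure_zero _ (measure_singleton _)] at h
  obtain ⟨j, hj⟩ := (h.eventually_lt_const hη).exists
  exact ⟨_, hpos j, div_le_self hr.le (by simp), hj⟩


set_option maxHeartbeats 1000000 in
lemma mv_ae {n : ℕ} (hn : 1 ≤ n) (A : AlphaForm n) {D : Set (Cn n)} {z0 : Cn n}
    {r : ℝ} (hr : 0 < r) (hr1 : r ≤ 1 / 2) (hsub : closedBall z0 (2 * r) ⊆ D) :
    ∃ C m : ℝ, 0 ≤ C ∧ 0 < m ∧ ∀ v, IsAlphaSubharmonic A D v → ∀ c M1 ρ : ℝ, 0 ≤ M1 →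
      (∀ x ∈ closedBall z0 (2 * r), v x - c ≤ M1) → 0 < ρ → ρ ≤ r →
      ∀ᵐ z', z' ∈ ball z0 r → c ≤ v z' → m * (v z' - c) ≤
        C * M1 * (∫ y in ball (0 : Cn n) ρ, (‖y‖ ^ (2 * n - 1))⁻¹) +
          C * (ρ ^ (2 * n - 1))⁻¹ * ∫ x in closedBall z0 (2 * r), max (v x - c) 0 := by
  obtain ⟨C, K, m, s0, hC, hK, hm, hs0, hker⟩ := kernel hn A z0 hr hr1
  refine ⟨C, m, hC, hm, ?_⟩
  intro v hv c M1 ρ hM1 hvM hρ hρr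
  obtain ⟨-, -, -, hloc, htest⟩ := hv
  simp only [EReal.toReal_coe] at hloc htest
  set B := closedBall z0 (2 * r) with hBdef
  have hvB : IntegrableOn v B := hloc.integrableOn_compact_subset hsub (isCompact_closedBall _ _)
  set w := B.indicator v with hwdef
  have hw : Integrable w := (integrable_indicator_iff measurableSet_closedBall).2 hvB
  filter_upwards [IsUnifLocDoublingMeasure.ae_tendsto_average_norm_sub volume hw.locallyIntegrable 1]
    with z' hleb hz' hcv
  have hz0 : dist z' z0 < r := hz'
  have hz'B : z' ∈ B := by rw [hBdef, mem_closedBall]; linarith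
  have hwz : w z' = v z' := Set.indicator_of_mem hz'B _
  have hball : closedBall z' r ⊆ B := by
    intro x hx
    rw [mem_closedBall] at hx
    rw [hBdef, mem_closedBall]
    linarith [dist_triangle x z' z0]
  set I1 := ∫ y in ball (0 : Cn n) ρ, (‖y‖ ^ (2 * n - 1))⁻¹ with hI1
  set I2 := ∫ x in B, max (v x - c) 0 with hI2
  set k : Cn n → ℝ := fun y => (‖y‖ ^ (2 * n - 1))⁻¹ with hk
  have hk0 : ∀ y, 0 ≤ k y := fun y => by positivity
  have hi1 : Integrable ((ball (0 : Cn n) ρ).indicator k) :=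
    (integrable_indicator_iff measurableSet_ball).2 (kint hn ρ)
  have hi1' : Integrable (fun x => (ball (0 : Cn n) ρ).indicator k (x - z')) := hi1.comp_sub_right z'
  have hi2 : Integrable (B.indicator fun x => max (v x - c) 0) :=
    (integrable_indicator_iff measurableSet_closedBall).2
      (hvB.sub (integrableOn_const measure_closedBall_lt_top.ne)).pos_part
  have hstep : ∀ s, 0 < s → s < s0 → m * (v z' - c) ≤ C * M1 * I1 + C * (ρ ^ (2 * n - 1))⁻¹ * I2 +
      K / s ^ (2 * n) * ∫ x in closedBall z' s, ‖w x - w z'‖ := by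
    intro s hs hss
    obtain ⟨ω, hω, hωc, hωs, hω0, hup, hlo, hoff, hmass⟩ :=
      hker z' (by rw [mem_closedBall]; linarith) s hs hss
    obtain ⟨hcont, hzero, hcs, hint0⟩ := alphaOpR_facts A hω hωc
    have hz : ∀ x, x ∉ closedBall z' r → alphaOpR A ω x = 0 := fun x hx => hzero x fun h => hx (hωs h)
    have ht := htest ω hω hωc (hωs.trans (hball.trans hsub)) hω0
    have e1 : ∫ z in D, v z * alphaOpR A ω z = ∫ z, w z * alphaOpR A ω z := by
      rw [setIntegral_eq_integral_of_forall_compl_eq_zero]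
      · refine integral_congr_ae (Eventually.of_forall fun x => ?_)
        by_cases hx : x ∈ B
        · simp only [hwdef, Set.indicator_of_mem hx]
        · simp only [hz x fun h => hx (hball h), mul_zero]
      · intro x hx
        rw [hz x fun h => hx (hsub (hball h)), mul_zero]
    rw [e1] at ht
    have h1 := mv_step hw hcont hcs hint0 ht hmass hlo (by positivity) hoff (hcv.trans_eq hwz.symm)
    rw [hwz] at h1 ⊢
    refine h1.trans (add_le_add_left ?_ _)
    have key : ∀ x, max (w x - c) 0 * max (alphaOpR A ω x) 0 ≤
        C * M1 * (ball (0 : Cn n) ρ).indicator k (x - z') +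
          C * (ρ ^ (2 * n - 1))⁻¹ * B.indicator (fun x => max (v x - c) 0) x := by
      intro x
      have n1 : 0 ≤ (ball (0 : Cn n) ρ).indicator k (x - z') := Set.indicator_nonneg (fun y _ => hk0 y) _
      have n2 : 0 ≤ B.indicator (fun x => max (v x - c) 0) x :=
        Set.indicator_nonneg (fun y _ => le_max_right _ _) _
      by_cases hx : x ∈ closedBall z' r
      · have hxB := hball hx
        have ew : w x = v x := Set.indicator_of_mem hxB _
        have hle : max (alphaOpR A ω x) 0 ≤ C * k (x - z') := max_le (hup x) (mul_nonneg hC (hk0 _))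
        rw [Set.indicator_of_mem hxB, ew] at *
        by_cases hx2 : x - z' ∈ ball (0 : Cn n) ρ
        · rw [Set.indicator_of_mem hx2] at *
          have : max (v x - c) 0 * max (alphaOpR A ω x) 0 ≤ M1 * (C * k (x - z')) := by
            gcongr
            exact max_le (hvM x hxB) hM1
          have : 0 ≤ C * (ρ ^ (2 * n - 1))⁻¹ * max (v x - c) 0 := by positivity
          linarith
        · rw [Set.indicator_of_notMem hx2]
          rw [mem_ball_zero_iff, not_lt] at hx2
          have h3 : k (x - z') ≤ (ρ ^ (2 * n - 1))⁻¹ := by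
            simp only [hk]; gcongr
          have : max (v x - c) 0 * max (alphaOpR A ω x) 0 ≤ max (v x - c) 0 * (C * (ρ ^ (2 * n - 1))⁻¹) := by
            gcongr
            exact hle.trans (by gcongr)
          linarith
      · rw [hz x hx]
        simp only [max_self, mul_zero]
        positivity
    have h0 : 0 ≤ᵐ[volume] fun x => max (w x - c) 0 * max (alphaOpR A ω x) 0 :=
      Eventually.of_forall fun x => mul_nonneg (le_max_right _ _) (le_max_right _ _)
    refine (integral_mono_of_nonneg h0 ((hi1'.const_mul _).add (hi2.const_mul _))
      (Eventually.of_forall key)).trans_eq ?_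
    simp only [Pi.add_apply]
    rw [integral_add (hi1'.const_mul _) (hi2.const_mul _), integral_const_mul, integral_const_mul,
      integral_indicator measurableSet_closedBall,
      integral_sub_right_eq_self (fun y => (ball (0 : Cn n) ρ).indicator k y) z',
      integral_indicator measurableSet_ball]
  have hlim := hleb (l := 𝓝[>] (0:ℝ)) (fun _ => z') (fun s => s) tendsto_id (by
    filter_upwards [self_mem_nhdsWithin] with s hs
    rw [one_mul]; exact mem_closedBall_self (le_of_lt hs))
  set V := volume.real (ball (0 : Cn n) 1) with hV
  have hVpos : 0 < V := ENNReal.toReal_pos (measure_ball_pos _ _ one_pos).ne' measure_ball_lt_top.ne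
  have hlim2 : Tendsto (fun s : ℝ => K / s ^ (2 * n) * ∫ x in closedBall z' s, ‖w x - w z'‖) (𝓝[>] 0) (𝓝 0) := by
    have := hlim.const_mul (K * V)
    rw [mul_zero] at this
    refine this.congr' ?_
    filter_upwards [self_mem_nhdsWithin] with s hs
    have hs' : (0:ℝ) < s := hs
    rw [setAverage_eq, Measure.addHaar_real_closedBall volume z' hs'.le, finrank_Cn, smul_eq_mul, ← hV]
    field_simp
  have hfin := hlim2.const_add (C * M1 * I1 + C * (ρ ^ (2 * n - 1))⁻¹ * I2)
  rw [add_zero] at hfin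
  refine ge_of_tendsto hfin ?_
  filter_upwards [Ioo_mem_nhdsGT hs0] with s hs
  exact hstep s hs.1 hs.2


set_option maxHeartbeats 1000000 in
lemma local_claim {n : ℕ} (hn : 1 ≤ n) (A : AlphaForm n) {D : Set (Cn n)} {z0 : Cn n}
    {r : ℝ} (hr : 0 < r) (hr1 : r ≤ 1 / 2) (hsub : closedBall z0 (2 * r) ⊆ D)
    {u : ℕ → Cn n → ℝ} (hu : ∀ j, IsAlphaSubharmonic A D (u j)) {M c δ : ℝ} (hδ : 0 < δ)
    (hM : ∀ j, ∀ x ∈ closedBall z0 (2 * r), u j x ≤ M)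
    (hc : ∀ x ∈ closedBall z0 (2 * r), ∀ᶠ j in atTop, u j x < c) :
    ∃ j₀ : ℕ, ∀ j ≥ j₀, ∀ z ∈ ball z0 r, u j z ≤ c + δ := by
  obtain ⟨C, m, hC, hm, hmv⟩ := mv_ae hn A hr hr1 hsub
  set M1 := max (M - c) 0 with hM1
  have hM10 : 0 ≤ M1 := le_max_right _ _
  have hmδ : 0 < m * δ := by positivity
  obtain ⟨ρ, hρ, hρr, hI⟩ := kint_small hn (η := m * δ / (2 * (C * M1 + 1))) (r := r) (by positivity) hr
  set I1 := ∫ y in ball (0 : Cn n) ρ, (‖y‖ ^ (2 * n - 1))⁻¹ with hI1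
  have hI1b : C * M1 * I1 ≤ m * δ / 2 := by
    rw [lt_div_iff₀ (by positivity)] at hI
    have : 0 ≤ I1 := integral_nonneg fun y => by positivity
    linarith
  set P := C * (ρ ^ (2 * n - 1))⁻¹ with hP
  have hP0 : 0 ≤ P := by positivity
  have hintg : ∀ j, IntegrableOn (u j) (closedBall z0 (2 * r)) := by
    intro j
    have h := (hu j).2.2.2.1
    simp only [EReal.toReal_coe] at h
    exact h.integrableOn_compact_subset hsub (isCompact_closedBall _ _)
  have hlim : Tendsto (fun j => ∫ x in closedBall z0 (2 * r), max (u j x - c) 0) atTop (𝓝 0) := by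
    have := tendsto_integral_of_dominated_convergence (μ := volume.restrict (closedBall z0 (2 * r)))
      (F := fun j x => max (u j x - c) 0) (f := fun _ => 0) (fun _ => M1)
      (fun j => ((hintg j).sub (integrableOn_const measure_closedBall_lt_top.ne)).pos_part.aestronglyMeasurable)
      (integrableOn_const measure_closedBall_lt_top.ne)
      (fun j => (ae_restrict_iff' measurableSet_closedBall).2 (Eventually.of_forall fun x hx => by
        rw [Real.norm_eq_abs, abs_of_nonneg (le_max_right _ _)]
        exact max_le_max (by linarith [hM j x hx]) le_rfl))
      ((ae_restrict_iff' measurableSet_closedBall).2 (Eventually.of_forall fun x hx => by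
        refine tendsto_const_nhds.congr' ?_
        filter_upwards [hc x hx] with j hj
        rw [max_eq_right (by linarith)]))
    simpa using this
  have hlim2 := hlim.const_mul P
  rw [mul_zero] at hlim2
  obtain ⟨j₀, hj₀⟩ := eventually_atTop.1 (hlim2.eventually_lt_const (show 0 < m * δ / 2 by positivity))
  refine ⟨j₀, fun j hj z hz => ?_⟩
  have hae := hmv (u j) (hu j) c M1 ρ hM10
    (fun x hx => le_max_of_le_left (by linarith [hM j x hx])) hρ hρr
  set S : Set (Cn n) := {x | u j x ≤ c + δ} with hS
  have hSae : volume (ball z0 r \ S) = 0 := by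
    refine measure_mono_null ?_ (ae_iff.1 hae)
    rintro x ⟨hx, hxS⟩ hcon
    have hxS' : c + δ < u j x := not_le.1 hxS
    have h1 := hcon hx (by linarith)
    have h2 := hj₀ j hj
    have h3 : m * δ < m * (u j x - c) := by gcongr; linarith
    linarith
  have hzD : z ∈ D := hsub (closedBall_subset_closedBall (by linarith) (ball_subset_closedBall hz))
  have hl := (hu j).2.2.1 z hzD S ⟨ball z0 r, isOpen_ball.mem_nhds hz, hSae⟩
  have : (u j z : EReal) ≤ ((c + δ : ℝ) : EReal) := by
    refine hl.symm.le.trans ?_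
    refine limsup_le_of_le (by isBoundedDefault) ?_
    filter_upwards [self_mem_nhdsWithin] with x hx
    exact EReal.coe_le_coe_iff.2 hx
  exact EReal.coe_le_coe_iff.1 this

lemma limsup_ev {v : ℕ → ℝ} {a c : ℝ} (h : Filter.limsup (fun j => (v j : EReal)) atTop ≤ (a : EReal))
    (hac : a < c) : ∀ᶠ j in atTop, v j < c := by
  have h1 := eventually_lt_of_limsup_lt (h.trans_lt (EReal.coe_lt_coe_iff.2 hac)) (by isBoundedDefault)
  filter_upwards [h1] with j hj
  exact EReal.coe_lt_coe_iff.1 hj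

lemma hartogs_local {n : ℕ} (A : AlphaForm n) (D : Set (Cn n))
    (hDo : IsOpen D)
    (u : ℕ → Cn n → ℝ) (hu : ∀ j, IsAlphaSubharmonic A D (u j))
    (hbd : ∀ z ∈ D, ∃ N ∈ 𝓝 z, ∃ M : ℝ, ∀ j, ∀ w ∈ N ∩ D, u j w ≤ M)
    (g : Cn n → ℝ) (hg : ContinuousOn g D)
    (hls : ∀ z ∈ D, Filter.limsup (fun j => (u j z : EReal)) atTop ≤ (g z : EReal))
    (z0 : Cn n) (hz0 : z0 ∈ D) (ε : ℝ) (hε : 0 < ε) :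
    ∃ U ∈ 𝓝 z0, ∃ j₀ : ℕ, ∀ j ≥ j₀, ∀ z ∈ U, u j z ≤ g z + ε := by
  rcases Nat.eq_zero_or_pos n with rfl | hn
  · obtain ⟨j₀, hj₀⟩ := eventually_atTop.1 (limsup_ev (hls z0 hz0) (show g z0 < g z0 + ε by linarith))
    refine ⟨Set.univ, univ_mem, j₀, fun j hj z _ => ?_⟩
    rw [Subsingleton.elim z z0]
    exact (hj₀ j hj).le
  · obtain ⟨N, hN, M, hM⟩ := hbd z0 hz0
    have hgc : ContinuousAt g z0 := hg.continuousAt (hDo.mem_nhds hz0)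
    have hgn : ∀ᶠ z in 𝓝 z0, |g z - g z0| < ε / 4 := by
      have := Metric.continuousAt_iff'.1 hgc (ε / 4) (by positivity)
      simpa [Real.dist_eq] using this
    obtain ⟨t, ht, hball⟩ := Metric.nhds_basis_closedBall.mem_iff.1
      (inter_mem (inter_mem hN (hDo.mem_nhds hz0)) hgn)
    have hr : 0 < min (t / 2) (1 / 2) := by positivity
    set r := min (t / 2) (1 / 2) with hrdef
    have hrt : 2 * r ≤ t := by linarith [min_le_left (t / 2) (1 / 2 : ℝ)]
    have hb2 : closedBall z0 (2 * r) ⊆ (N ∩ D) ∩ {z | |g z - g z0| < ε / 4} :=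
      (closedBall_subset_closedBall hrt).trans hball
    obtain ⟨j₀, hj₀⟩ := local_claim hn A hr (min_le_right _ _) (fun x hx => (hb2 hx).1.2) hu
      (M := M) (c := g z0 + ε / 4) (δ := ε / 4) (by positivity) (fun j x hx => hM j x (hb2 hx).1)
      (fun x hx => limsup_ev (hls x (hb2 hx).1.2) (by
        have h1 : |g x - g z0| < ε / 4 := (hb2 hx).2
        linarith [(abs_lt.1 h1).2]))
    refine ⟨ball z0 r, ball_mem_nhds _ hr, j₀, fun j hj z hz => ?_⟩
    have h1 := hj₀ j hj z hz
    have h2 : |g z - g z0| < ε / 4 :=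
      (hb2 (closedBall_subset_closedBall (by linarith) (ball_subset_closedBall hz))).2
    linarith [(abs_lt.1 h2).1]

/-- **Hartogs lemma.** Let `u j` be a sequence of `α`-subharmonic
functions on a domain `D ⊆ ℂⁿ`, locally uniformly bounded from above, with
`limsup_j u j z ≤ g z` for every `z ∈ D`, `g` continuous on `D`.  Then for every compact
`K ⊆ D` and `ε > 0` there is `j₀` with `u j z ≤ g z + ε` for all `z ∈ K`, `j ≥ j₀`. -/
theorem hartogs_lemma_alpha {n : ℕ} (A : AlphaForm n) (D : Set (Cn n))
    (hDo : IsOpen D) (hDc : IsConnected D)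
    (u : ℕ → Cn n → ℝ) (hu : ∀ j, IsAlphaSubharmonic A D (u j))
    (hbd : ∀ z ∈ D, ∃ N ∈ 𝓝 z, ∃ M : ℝ, ∀ j, ∀ w ∈ N ∩ D, u j w ≤ M)
    (g : Cn n → ℝ) (hg : ContinuousOn g D)
    (hls : ∀ z ∈ D, Filter.limsup (fun j => (u j z : EReal)) atTop ≤ (g z : EReal)) :
    ∀ K : Set (Cn n), IsCompact K → K ⊆ D → ∀ ε > (0 : ℝ),
      ∃ j₀ : ℕ, ∀ j ≥ j₀, ∀ z ∈ K, u j z ≤ g z + ε := by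
  intro K hK hKD ε hε
  have hloc := hartogs_local A D hDo u hu hbd g hg hls
  refine hK.induction_on (p := fun s => ∃ j₀ : ℕ, ∀ j ≥ j₀, ∀ z ∈ s, u j z ≤ g z + ε) ?_ ?_ ?_ ?_
  · exact ⟨0, fun j _ z hz => absurd hz (Set.notMem_empty z)⟩
  · rintro s t hst ⟨j₀, h⟩
    exact ⟨j₀, fun j hj z hz => h j hj z (hst hz)⟩
  · rintro s t ⟨j₁, h1⟩ ⟨j₂, h2⟩
    refine ⟨max j₁ j₂, fun j hj z hz => ?_⟩
    rcases hz with hz | hz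
    · exact h1 j ((le_max_left _ _).trans hj) z hz
    · exact h2 j ((le_max_right _ _).trans hj) z hz
  · intro z hz
    obtain ⟨U, hU, h⟩ := hloc z (hKD hz) ε hε
    exact ⟨U, mem_nhdsWithin_of_mem_nhds hU, h⟩
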